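/- arXiv:1207.7154 — 6 statements merged into one kernel-verified Lean document; each statement's English description precedes it below -/
import Mathlib

section
/- Let Q ≥ 2 be an integer and, for n ≥ 1, let X_{Q;n} be the set of functions x : {1,…,n} → {0,1} such that x_k·x_{Qk} = 0 for every k ≥ 1 with Q·k ≤ n. Then the limit lim_{n→∞} (1/n)·log|X_{Q;n}| exists and equals (Q−1)^2 · Σ_{k=1}^∞ Q^{−(k+1)}·log a_k (the series converges). -/
/-!
Admissible words of length `n` are independent sets of the graph on `{1, …, n}` joining `k` to
`Q * k`. This graph is a disjoint union of paths `i, Q i, Q² i, …` with `Q ∤ i`, and a path with `e`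
vertices has `aGM e` independent sets. Adding the vertex `n + 1 = Q ^ e * i`, `Q ∤ i`, lengthens one
path from `e` to `e + 1` vertices, so it multiplies the count by `aGM (e + 1) / aGM e`
(`card_indep_Icc_succ`). Summing logarithms by the exact power of `Q` dividing each `m ≤ n` gives
`log |X_n| = ∑ e, (log a_{e+1} - log a_e) * (⌊n / Q ^ e⌋ - ⌊n / Q ^ (e+1)⌋)` (`hasSum_log_card`).
Since `0 ≤ log a_{e+1} - log a_e ≤ log 2`, dominated convergence gives the limit of `log |X_n| / n`
(`tendsto_log_card_div`), and summation by parts, using `log a_0 = 0`, turns it into the stated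
series.
-/

open Filter Topology

/-- `a k` : the number of binary words of length `k` with no two consecutive `1`'s,
given by `a 1 = 2`, `a 2 = 3`, `a (k+1) = a k + a (k-1)` (with `a 0 = 1`). -/
def aGM : ℕ → ℕ
  | 0 => 1
  | 1 => 2
  | n + 2 => aGM (n + 1) + aGM n

/-- The set of admissible `n`-words of the multiplicative golden-mean system `𝕏_Q^0`:
functions `x : {1,…,n} → {0,1}` (encoded as functions `ℕ → ℕ` bounded by `1` and
vanishing outside `[1,n]`) with `x k * x (Q*k) = 0` whenever `1 ≤ k` and `Q*k ≤ n`. -/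
def XQ0 (Q n : ℕ) : Set (ℕ → ℕ) :=
  {x | (∀ m, x m ≤ 1) ∧
       (∀ k, 1 ≤ k → Q * k ≤ n → x k * x (Q * k) = 0) ∧
       (∀ m, m = 0 ∨ n < m → x m = 0)}

/-! ### Counting independent sets chain by chain -/

/-- The independent subsets of `S` for the graph on `ℕ` joining each `k` to `Q * k`. -/
def indep (Q : ℕ) (S : Finset ℕ) : Finset (Finset ℕ) :=
  S.powerset.filter (fun T => ∀ k ∈ T, Q * k ∉ T)

/-- Deletion recursion: an independent subset of `insert m S` either avoids `m`, or consists of `m`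
and an independent set avoiding the neighbours of `m`; by hypothesis the only possible neighbour
in `S` is the `k` with `Q * k = m`. -/
lemma card_indep_insert (Q m : ℕ) (S : Finset ℕ) (hm : m ∉ S) (hm' : Q * m ∉ insert m S) :
    (indep Q (insert m S)).card =
      (indep Q S).card + (indep Q (S.filter (fun k => Q * k ≠ m))).card := by
  have key : indep Q (insert m S) =
      indep Q S ∪ (indep Q (S.filter (fun k => Q * k ≠ m))).image (insert m) := by
    ext T
    simp only [indep, Finset.mem_union, Finset.mem_image, Finset.mem_filter, Finset.mem_powerset]
    simp only [Finset.mem_insert, not_or] at hm'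
    constructor
    · rintro ⟨hT, hi⟩
      by_cases hmT : m ∈ T
      · right
        refine ⟨T.erase m, ⟨?_, ?_⟩, Finset.insert_erase hmT⟩
        · intro k hk
          rw [Finset.mem_erase] at hk
          have h1 := hT hk.2
          rw [Finset.mem_insert] at h1
          refine Finset.mem_filter.2 ⟨h1.resolve_left hk.1, fun h => hi k hk.2 (h ▸ hmT)⟩
        · intro k hk h
          exact hi k (Finset.mem_of_mem_erase hk) (Finset.mem_of_mem_erase h)
      · left
        exact ⟨(Finset.subset_insert_iff_of_notMem hmT).1 hT, hi⟩
    · rintro (⟨hT, hi⟩ | ⟨U, ⟨hU, hi⟩, rfl⟩)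
      · exact ⟨hT.trans (Finset.subset_insert _ _), hi⟩
      · refine ⟨Finset.insert_subset_insert _ (hU.trans (Finset.filter_subset _ _)), ?_⟩
        intro k hk h
        rw [Finset.mem_insert] at hk h
        rcases hk with rfl | hk
        · rcases h with h | h
          · exact hm'.1 h
          · exact hm'.2 (Finset.mem_filter.1 (hU h)).1
        · rcases h with h | h
          · exact (Finset.mem_filter.1 (hU hk)).2 h
          · exact hi k hk h
  rw [key, Finset.card_union_of_disjoint, Finset.card_image_of_injOn]
  · intro U hU V hV h
    have aux : ∀ W ∈ indep Q (S.filter (fun k => Q * k ≠ m)), m ∉ W := fun W hW h =>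
      hm (Finset.mem_filter.1 (Finset.mem_powerset.1 (Finset.mem_filter.1 hW).1 h)).1
    rw [← Finset.erase_insert (aux U hU), h, Finset.erase_insert (aux V hV)]
  · rw [Finset.disjoint_left]
    intro T hT hT'
    obtain ⟨U, _, rfl⟩ := Finset.mem_image.1 hT'
    exact hm (Finset.mem_powerset.1 (Finset.mem_filter.1 hT).1 (Finset.mem_insert_self _ _))

/-- Adjoining to `S` the first `e` elements of a chain `i, Q i, Q² i, …` that is disconnected
from `S` multiplies the number of independent sets by `aGM e`. -/
lemma card_indep_chain (Q : ℕ) (hQ : 2 ≤ Q) (i : ℕ) (hi : ¬ Q ∣ i) (S : Finset ℕ)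
    (h1 : ∀ j, i * Q ^ j ∉ S) (h2 : ∀ k ∈ S, ∀ j, Q * k ≠ i * Q ^ j) (e : ℕ) :
    (indep Q ((Finset.range e).image (fun j => i * Q ^ j) ∪ S)).card =
      aGM e * (indep Q S).card := by
  have hi0 : 0 < i := Nat.pos_of_ne_zero (fun h => hi (h ▸ dvd_zero Q))
  have inj : ∀ a b, i * Q ^ a = i * Q ^ b → a = b := fun a b h =>
    Nat.pow_right_injective hQ (Nat.eq_of_mul_eq_mul_left hi0 h)
  have hsh : ∀ j, Q * (i * Q ^ j) = i * Q ^ (j + 1) := fun j => by ring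
  have notmem : ∀ e j, e ≤ j → i * Q ^ j ∉ (Finset.range e).image (fun j => i * Q ^ j) ∪ S := by
    intro e j hj h
    rcases Finset.mem_union.1 h with h | h
    · obtain ⟨l, hl, hl'⟩ := Finset.mem_image.1 h
      have := inj _ _ hl'
      rw [Finset.mem_range] at hl
      omega
    · exact h1 j h
  have ins : ∀ e, (Finset.range (e + 1)).image (fun j => i * Q ^ j) ∪ S =
      insert (i * Q ^ e) ((Finset.range e).image (fun j => i * Q ^ j) ∪ S) := by
    intro e
    rw [Finset.range_add_one, Finset.image_insert, Finset.insert_union]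
  have step : ∀ e, (indep Q ((Finset.range (e + 1)).image (fun j => i * Q ^ j) ∪ S)).card =
      (indep Q ((Finset.range e).image (fun j => i * Q ^ j) ∪ S)).card +
      (indep Q (((Finset.range e).image (fun j => i * Q ^ j) ∪ S).filter
        (fun k => Q * k ≠ i * Q ^ e))).card := by
    intro e
    rw [ins, card_indep_insert Q _ _ (notmem e e le_rfl)]
    rw [hsh, ← ins]
    exact notmem _ _ le_rfl
  induction e using Nat.twoStepInduction with
  | zero => simp [aGM]
  | one =>
    rw [step 0, Finset.filter_true_of_mem]
    · simp [aGM]; ring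
    · intro k hk
      simp only [Finset.range_zero, Finset.image_empty, Finset.empty_union] at hk
      exact h2 k hk 0
  | more e ih1 ih2 =>
    have hf : ((Finset.range (e + 1)).image (fun j => i * Q ^ j) ∪ S).filter
        (fun k => Q * k ≠ i * Q ^ (e + 1)) = (Finset.range e).image (fun j => i * Q ^ j) ∪ S := by
      rw [ins, Finset.filter_insert, if_neg (by simp [hsh]), Finset.filter_true_of_mem]
      intro k hk hk'
      rw [← hsh] at hk'
      have := Nat.eq_of_mul_eq_mul_left (by omega) hk'
      exact notmem e e le_rfl (this ▸ hk)
    rw [step (e + 1), hf, ih1, ih2, aGM]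
    ring

/-- Passing from `n` to `n + 1 = Q ^ e * i` with `Q ∤ i` lengthens the chain of `i` from `e` to
`e + 1` elements and leaves the other chains unchanged. -/
lemma card_indep_Icc_succ (Q : ℕ) (hQ : 2 ≤ Q) (n e i : ℕ) (hi : ¬ Q ∣ i)
    (hn : n + 1 = Q ^ e * i) :
    (indep Q (Finset.Icc 1 (n + 1))).card * aGM e =
      (indep Q (Finset.Icc 1 n)).card * aGM (e + 1) := by
  have hi0 : 0 < i := Nat.pos_of_ne_zero (fun h => hi (h ▸ dvd_zero Q))
  classical
  let S := (Finset.Icc 1 n).filter (fun m => ∀ j, m ≠ i * Q ^ j)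
  have h1 : ∀ j, i * Q ^ j ∉ S := fun j h => (Finset.mem_filter.1 h).2 j rfl
  have h2 : ∀ k ∈ S, ∀ j, Q * k ≠ i * Q ^ j := by
    intro k hk j h
    cases j with
    | zero => exact hi ⟨k, by simpa using h.symm⟩
    | succ j =>
      refine (Finset.mem_filter.1 hk).2 j (Nat.eq_of_mul_eq_mul_left (by omega : 0 < Q) ?_)
      rw [h]; ring
  have hlt : ∀ j, i * Q ^ j ≤ n ↔ j < e := by
    intro j
    rw [← Nat.lt_add_one_iff, hn, mul_comm, Nat.mul_lt_mul_right hi0,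
      Nat.pow_lt_pow_iff_right (by omega)]
  have e0 : Finset.Icc 1 n = (Finset.range e).image (fun j => i * Q ^ j) ∪ S := by
    ext m
    simp only [S, Finset.mem_union, Finset.mem_image, Finset.mem_range, Finset.mem_filter]
    constructor
    · intro hm
      by_cases h : ∀ j, m ≠ i * Q ^ j
      · exact Or.inr ⟨hm, h⟩
      · push Not at h
        obtain ⟨j, rfl⟩ := h
        exact Or.inl ⟨j, (hlt j).1 (Finset.mem_Icc.1 hm).2, rfl⟩
    · rintro (⟨j, hj, rfl⟩ | h)
      · exact Finset.mem_Icc.2 ⟨Nat.mul_pos hi0 (Nat.pow_pos (by omega)), (hlt j).2 hj⟩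
      · exact h.1
  have e1 : Finset.Icc 1 (n + 1) = (Finset.range (e + 1)).image (fun j => i * Q ^ j) ∪ S := by
    rw [Finset.range_add_one, Finset.image_insert, Finset.insert_union, ← e0, mul_comm i, ← hn]
    ext m
    simp only [Finset.mem_insert, Finset.mem_Icc]
    omega
  rw [e1, e0, card_indep_chain Q hQ i hi S h1 h2, card_indep_chain Q hQ i hi S h1 h2]
  ring

lemma card_XQ0 (Q n : ℕ) :
    Nat.card (XQ0 Q n) = (indep Q (Finset.Icc 1 n)).card := by
  have key : XQ0 Q n = (fun (T : Finset ℕ) (m : ℕ) => if m ∈ T then 1 else 0) ''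
      (indep Q (Finset.Icc 1 n) : Set (Finset ℕ)) := by
    ext x
    simp only [XQ0, Set.mem_ofPred_eq, Set.mem_image, Finset.mem_coe, indep, Finset.mem_filter,
      Finset.mem_powerset]
    constructor
    · rintro ⟨hx1, hx2, hx3⟩
      refine ⟨(Finset.Icc 1 n).filter (fun m => x m = 1), ⟨Finset.filter_subset _ _, ?_⟩, ?_⟩
      · intro k hk hk'
        simp only [Finset.mem_filter, Finset.mem_Icc] at hk hk'
        have := hx2 k hk.1.1 hk'.1.2
        rw [hk.2, hk'.2] at this
        omega
      · funext m
        have a := hx1 m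
        have b := hx3 m
        simp only [Finset.mem_filter, Finset.mem_Icc]
        split_ifs with h
        · omega
        · by_contra hne
          exact h ⟨by by_contra hc; exact hne (b (by omega)).symm, by omega⟩
    · rintro ⟨T, ⟨hT, hi⟩, rfl⟩
      refine ⟨fun m => by dsimp only; split_ifs <;> omega, fun k _ _ => ?_, fun m hm => ?_⟩
      · by_cases h : k ∈ T
        · simp [hi k h]
        · simp [h]
      · have : m ∉ T := fun h => by
          have := Finset.mem_Icc.1 (hT h)
          omega
        simp [this]
  rw [key, Nat.card_coe_set_eq, Set.ncard_image_of_injective, Set.ncard_coe_finset]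
  intro S T h
  ext m
  have := congrFun h m
  by_cases h1 : m ∈ S <;> by_cases h2 : m ∈ T <;> simp_all

/-! ### The logarithm of the count as a series -/

lemma aGM_bounds (k : ℕ) : 0 < aGM k ∧ aGM k ≤ aGM (k + 1) ∧ aGM (k + 1) ≤ 2 * aGM k := by
  induction k with
  | zero => simp [aGM]
  | succ k ih =>
    have : aGM (k + 1 + 1) = aGM (k + 1) + aGM k := rfl
    omega

/-- The logarithmic growth of the number of admissible words on a chain when its length passes
from `e` to `e + 1`. -/
noncomputable def logStep (e : ℕ) : ℝ := Real.log (aGM (e + 1)) - Real.log (aGM e)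

lemma logStep_bounds (e : ℕ) : 0 ≤ logStep e ∧ logStep e ≤ Real.log 2 := by
  obtain ⟨h0, h1, h2⟩ := aGM_bounds e
  have h0' : (0 : ℝ) < aGM e := by exact_mod_cast h0
  have h1' : (aGM e : ℝ) ≤ aGM (e + 1) := by exact_mod_cast h1
  have h2' : (aGM (e + 1) : ℝ) ≤ 2 * aGM e := by exact_mod_cast h2
  have a := Real.log_le_log h0' h1'
  have b := Real.log_le_log (h0'.trans_le h1') h2'
  rw [Real.log_mul (by norm_num) h0'.ne'] at b
  unfold logStep
  constructor <;> linarith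

/-- The number of `m ∈ [1, n]` divisible by `Q ^ e` but not by `Q ^ (e + 1)` is
`n / Q ^ e - n / Q ^ (e + 1)`, and each of them contributes `logStep e`. -/
lemma hasSum_log_card (Q : ℕ) (hQ : 2 ≤ Q) (n : ℕ) :
    HasSum (fun e : ℕ => logStep e * (((n / Q ^ e : ℕ) : ℝ) - ((n / Q ^ (e + 1) : ℕ) : ℝ)))
      (Real.log (indep Q (Finset.Icc 1 n)).card) := by
  have hpos : ∀ n, 0 < (indep Q (Finset.Icc 1 n)).card := fun n =>
    Finset.card_pos.2 ⟨∅, by simp [indep]⟩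
  induction n with
  | zero => simp [indep, Finset.filter_singleton]
  | succ n ih =>
    obtain ⟨e, i, hi, hn⟩ := Nat.exists_eq_pow_mul_and_not_dvd (n := n + 1) (by omega) Q (by omega)
    have hdvd : ∀ j, Q ^ j ∣ n + 1 ↔ j ≤ e := by
      intro j
      constructor
      · intro h
        by_contra hj
        have h' : Q ^ (e + 1) ∣ Q ^ e * i := hn ▸ (pow_dvd_pow Q (by omega)).trans h
        rw [pow_succ] at h'
        exact hi (Nat.dvd_of_mul_dvd_mul_left (Nat.pow_pos (by omega)) h')
      · intro h
        rw [hn]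
        exact (pow_dvd_pow Q h).mul_right i
    have hs : HasSum (fun j => if j = e then logStep e else 0) (logStep e) := by
      simpa using hasSum_ite_eq e (logStep e)
    convert ih.add hs using 1
    · funext j
      rw [Nat.succ_div, Nat.succ_div]
      simp only [hdvd]
      rcases lt_trichotomy j e with h | rfl | h
      · rw [if_pos (by omega), if_pos (by omega), if_neg (by omega)]; push_cast; ring
      · simp; ring
      · rw [if_neg (by omega), if_neg (by omega), if_neg (by omega)]; push_cast; ring
    · have h := card_indep_Icc_succ Q hQ n e i hi hn
      have h' : ((indep Q (Finset.Icc 1 (n + 1))).card : ℝ) * aGM e =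
        (indep Q (Finset.Icc 1 n)).card * aGM (e + 1) := by exact_mod_cast h
      have hne : ∀ m, ((indep Q (Finset.Icc 1 m)).card : ℝ) ≠ 0 := fun m => by
        exact_mod_cast (hpos m).ne'
      have hane : ∀ m, (aGM m : ℝ) ≠ 0 := fun m => by exact_mod_cast (aGM_bounds m).1.ne'
      have := congrArg Real.log h'
      rw [Real.log_mul (hne _) (hane _), Real.log_mul (hne _) (hane _)] at this
      unfold logStep
      linarith

/-! ### Passage to the limit -/

lemma tendsto_natDiv_div (d : ℕ) :
    Tendsto (fun n : ℕ => ((n / d : ℕ) : ℝ) / n) atTop (𝓝 ((d : ℝ)⁻¹)) := by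
  have h := (tendsto_nat_floor_mul_div_atTop (R := ℝ) (a := (d : ℝ)⁻¹) (by positivity)).comp
    tendsto_natCast_atTop_atTop
  refine h.congr fun n => ?_
  simp only [Function.comp]
  rw [inv_mul_eq_div, Nat.floor_div_eq_div]

lemma tendsto_log_card_div (Q : ℕ) (hQ : 2 ≤ Q) :
    Tendsto (fun n : ℕ => Real.log (indep Q (Finset.Icc 1 n)).card / (n : ℝ)) atTop
      (𝓝 (∑' e : ℕ, logStep e * (((Q : ℝ) ^ e)⁻¹ - ((Q : ℝ) ^ (e + 1))⁻¹))) := by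
  have hQ' : (2 : ℝ) ≤ Q := by exact_mod_cast hQ
  have hbound : Summable (fun e : ℕ => Real.log 2 * ((Q : ℝ)⁻¹) ^ e) :=
    (summable_geometric_of_lt_one (by positivity) (inv_lt_one_of_one_lt₀ (by linarith))).mul_left _
  have := tendsto_tsum_of_dominated_convergence (𝓕 := atTop)
    (f := fun (n : ℕ) (e : ℕ) =>
      logStep e * (((n / Q ^ e : ℕ) : ℝ) / n - ((n / Q ^ (e + 1) : ℕ) : ℝ) / n))
    (g := fun e : ℕ => logStep e * (((Q : ℝ) ^ e)⁻¹ - ((Q : ℝ) ^ (e + 1))⁻¹)) hbound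
    (fun e => by
      have h1 := tendsto_natDiv_div (Q ^ e)
      have h2 := tendsto_natDiv_div (Q ^ (e + 1))
      push_cast at h1 h2
      exact (h1.sub h2).const_mul _)
    (by
      filter_upwards [eventually_gt_atTop 0] with n hn e
      have hn' : (0 : ℝ) < n := by exact_mod_cast hn
      obtain ⟨hb0, hb1⟩ := logStep_bounds e
      have hle : ((n / Q ^ (e + 1) : ℕ) : ℝ) ≤ ((n / Q ^ e : ℕ) : ℝ) := by
        exact_mod_cast Nat.div_le_div_left (Nat.pow_le_pow_right (by omega) (by omega))
          (Nat.pow_pos (by omega))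
      have hle' : ((n / Q ^ e : ℕ) : ℝ) / n ≤ ((Q : ℝ)⁻¹) ^ e := by
        rw [div_le_iff₀ hn', inv_pow, inv_mul_eq_div]
        exact_mod_cast (Nat.cast_div_le (α := ℝ) (m := n) (n := Q ^ e))
      have h0 : 0 ≤ ((n / Q ^ (e + 1) : ℕ) : ℝ) / n := by positivity
      have hd : ((n / Q ^ (e + 1) : ℕ) : ℝ) / n ≤ ((n / Q ^ e : ℕ) : ℝ) / n := by gcongr
      rw [Real.norm_of_nonneg (mul_nonneg hb0 (by linarith))]
      exact mul_le_mul hb1 (by linarith) (by linarith) (Real.log_nonneg (by norm_num)))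
  refine this.congr fun n => ?_
  rw [← (hasSum_log_card Q hQ n).tsum_eq, ← tsum_div_const]
  exact tsum_congr fun e => by ring

lemma summable_log_aGM (Q : ℕ) (hQ : 2 ≤ Q) :
    Summable (fun k : ℕ => Real.log (aGM k) * ((Q : ℝ)⁻¹) ^ k) := by
  have hQ' : (2 : ℝ) ≤ Q := by exact_mod_cast hQ
  have hlog : ∀ k, 0 ≤ Real.log (aGM k) ∧ Real.log (aGM k) ≤ k * Real.log 2 := by
    intro k
    refine ⟨Real.log_natCast_nonneg _, ?_⟩
    induction k with
    | zero => simp [aGM]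
    | succ k ih =>
      have := (logStep_bounds k).2
      unfold logStep at this
      push_cast
      linarith
  have hr : ‖(Q : ℝ)⁻¹‖ < 1 := by
    rw [Real.norm_of_nonneg (by positivity)]
    exact inv_lt_one_of_one_lt₀ (by linarith)
  have hs := (summable_pow_mul_geometric_of_norm_lt_one 1 hr).mul_left (Real.log 2)
  refine Summable.of_nonneg_of_le (fun k => mul_nonneg (hlog k).1 (by positivity)) (fun k => ?_) hs
  calc Real.log (aGM k) * ((Q : ℝ)⁻¹) ^ k ≤ (k * Real.log 2) * ((Q : ℝ)⁻¹) ^ k :=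
        mul_le_mul_of_nonneg_right (hlog k).2 (by positivity)
    _ = _ := by ring

/-- For `Q ≥ 2`, the limit `lim_{n→∞} (1/n)·log |X_{Q;n}|` exists and
equals `(Q−1)^2 · ∑_{k=1}^∞ Q^{−(k+1)} log a_k`, the series being convergent. -/
theorem entropy_XQ0 (Q : ℕ) (hQ : 2 ≤ Q) :
    Summable (fun k : ℕ => (1 / (Q : ℝ) ^ (k + 2)) * Real.log (aGM (k + 1))) ∧
    Tendsto (fun n : ℕ => Real.log (Nat.card (XQ0 Q n)) / (n : ℝ)) atTop
      (nhds (((Q : ℝ) - 1) ^ 2 *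
        ∑' k : ℕ, (1 / (Q : ℝ) ^ (k + 2)) * Real.log (aGM (k + 1)))) := by
  have hQ' : (2 : ℝ) ≤ Q := by exact_mod_cast hQ
  have hQ0 : (Q : ℝ) ≠ 0 := by positivity
  have hs := summable_log_aGM Q hQ
  have hs1 := (summable_nat_add_iff 1).2 hs
  have hterm : (fun k : ℕ => (1 / (Q : ℝ) ^ (k + 2)) * Real.log (aGM (k + 1))) =
      fun k : ℕ => (Q : ℝ)⁻¹ * (Real.log (aGM (k + 1)) * ((Q : ℝ)⁻¹) ^ (k + 1)) := by
    funext k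
    rw [one_div, ← inv_pow]
    ring
  rw [hterm]
  refine ⟨hs1.mul_left _, ?_⟩
  have hlim := tendsto_log_card_div Q hQ
  simp only [card_XQ0]
  convert hlim using 2
  -- Summation by parts: with `s k = log (a_k) * Q⁻ᵏ`, the summand on the right is
  -- `(Q - 1) * s (e + 1) - (1 - Q⁻¹) * s e`, and `s 0 = 0`.
  have hparts : (fun e : ℕ => logStep e * (((Q : ℝ) ^ e)⁻¹ - ((Q : ℝ) ^ (e + 1))⁻¹)) =
      fun e : ℕ => ((Q : ℝ) - 1) * (Real.log (aGM (e + 1)) * ((Q : ℝ)⁻¹) ^ (e + 1)) -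
        (1 - (Q : ℝ)⁻¹) * (Real.log (aGM e) * ((Q : ℝ)⁻¹) ^ e) := by
    funext e
    unfold logStep
    simp only [inv_pow]
    field_simp
    ring
  have hshift := hs.tsum_eq_zero_add
  have hzero : Real.log (aGM 0) * ((Q : ℝ)⁻¹) ^ 0 = 0 := by simp [aGM]
  rw [hzero, zero_add] at hshift
  rw [hparts, (hs1.mul_left _).tsum_sub (hs.mul_left _), tsum_mul_left, tsum_mul_left,
    tsum_mul_left, hshift]
  field_simp
end

section
/- For K ≥ 1 let J_K = {i ∈ I_{2,3} : 1 ≤ i ≤ q_K}, for i ∈ J_K let q_K(i) = max{q ∈ M_{2,3} : i·q ≤ q_K}, and for 1 ≤ k ≤ K let α_k(K) be the number of i ∈ J_K with q_K(i) = q_k. Then for every fixed k ≥ 1, lim_{K→∞} α_k(K)/q_K = (1/3)·(1/q_k − 1/q_{k+1}). -/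
/-!
Write `Q = q_K`. For `i ≥ 1` the condition `q_K(i) = q_k` means `i·q_k ≤ Q < i·q_{k+1}`, i.e.
`⌊Q/q_{k+1}⌋ < i ≤ ⌊Q/q_k⌋` (`qmax23_eq_iff`). Hence `α_k(K)` is a difference of two values of
the counting function of the integers prime to 6 (`alpha23_add`), which has the closed form
`⌊(n+5)/6⌋ + ⌊(n+1)/6⌋ = n/3 + O(1)`. So `α_k(K) = Q/3·(1/q_k − 1/q_{k+1}) + O(1)`,
and dividing by `Q → ∞` gives the limit.
-/

open Filter Topology

/-- Membership in `M_{2,3} = {2^a·3^b}`. -/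
def M23 (m : ℕ) : Prop := ∃ a b : ℕ, m = 2 ^ a * 3 ^ b

/-- `q23 k` is the `(k+1)`-st element of `M_{2,3}` in increasing order
(so `q23 0 = q_1 = 1`, `q23 1 = q_2 = 2`, ...). -/
noncomputable def q23 (k : ℕ) : ℕ := Nat.nth M23 k

/-- `I_{2,3}` : positive integers divisible by neither 2 nor 3. -/
def I23 (i : ℕ) : Prop := 0 < i ∧ ¬ 2 ∣ i ∧ ¬ 3 ∣ i

/-- `q_K(i) = max {q ∈ M_{2,3} : i·q ≤ q_K}`. -/
noncomputable def qmax23 (K i : ℕ) : ℕ := sSup {q : ℕ | M23 q ∧ i * q ≤ q23 K}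

/-- `α_k(K)` : the number of `i ∈ I_{2,3}`, `1 ≤ i ≤ q_K`, with `q_K(i) = q_k`. -/
noncomputable def alpha23 (k K : ℕ) : ℕ :=
  Nat.card {i : ℕ | I23 i ∧ i ≤ q23 K ∧ qmax23 K i = q23 k}

lemma M23_infinite : (Set.ofPred M23).Infinite :=
  Set.infinite_of_injective_forall_mem (f := fun a : ℕ => 2 ^ a)
    (Nat.pow_right_injective le_rfl) (fun a => ⟨a, 0, by simp⟩)

lemma q23_strictMono : StrictMono q23 := Nat.nth_strictMono M23_infinite

lemma M23_q23 (k : ℕ) : M23 (q23 k) := Nat.nth_mem_of_infinite M23_infinite k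

lemma M23_pos {m : ℕ} (h : M23 m) : 0 < m := by
  obtain ⟨a, b, rfl⟩ := h
  positivity

lemma exists_q23_eq {m : ℕ} (h : M23 m) : ∃ j, q23 j = m := by
  have h' : m ∈ Set.range (Nat.nth M23) := by
    rw [Nat.range_nth_of_infinite M23_infinite]
    exact h
  exact h'

lemma qmax23_eq_iff {K i k : ℕ} (hi : 0 < i) (hiK : i ≤ q23 K) :
    qmax23 K i = q23 k ↔ i * q23 k ≤ q23 K ∧ q23 K < i * q23 (k + 1) := by
  have hbdd : BddAbove {q : ℕ | M23 q ∧ i * q ≤ q23 K} :=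
    ⟨q23 K, fun q hq => (Nat.le_mul_of_pos_left q hi).trans hq.2⟩
  have hne : {q : ℕ | M23 q ∧ i * q ≤ q23 K}.Nonempty := ⟨1, ⟨0, 0, by simp⟩, by simpa using hiK⟩
  constructor
  · intro h
    have hmem := Nat.sSup_mem hne hbdd
    change sSup {q : ℕ | M23 q ∧ i * q ≤ q23 K} = q23 k at h
    rw [h] at hmem
    refine ⟨hmem.2, ?_⟩
    by_contra! hle
    have hsup := le_csSup hbdd ⟨M23_q23 (k + 1), hle⟩
    rw [h] at hsup
    exact absurd (q23_strictMono (Nat.lt_succ_self k)) (not_lt.mpr hsup)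
  · rintro ⟨h1, h2⟩
    refine IsGreatest.csSup_eq ⟨⟨M23_q23 k, h1⟩, ?_⟩
    rintro q ⟨hq, hqK⟩
    obtain ⟨j, rfl⟩ := exists_q23_eq hq
    have hlt : q23 j < q23 (k + 1) := Nat.lt_of_mul_lt_mul_left (hqK.trans_lt h2)
    exact q23_strictMono.monotone (Nat.lt_succ_iff.mp (q23_strictMono.lt_iff_lt.mp hlt))

/-- The elements of `I_{2,3}` up to `n`. -/
def I23upTo (n : ℕ) : Finset ℕ := (Finset.Icc 1 n).filter (fun i => ¬ 2 ∣ i ∧ ¬ 3 ∣ i)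

lemma mem_I23upTo {n i : ℕ} : i ∈ I23upTo n ↔ I23 i ∧ i ≤ n := by
  simp only [I23upTo, Finset.mem_filter, Finset.mem_Icc, I23, Nat.succ_le_iff]
  tauto

lemma card_I23upTo (n : ℕ) : (I23upTo n).card = (n + 5) / 6 + (n + 1) / 6 := by
  induction n with
  | zero => rfl
  | succ n ih =>
    have hIcc : Finset.Icc 1 (n + 1) = insert (n + 1) (Finset.Icc 1 n) := by
      ext i
      simp only [Finset.mem_Icc, Finset.mem_insert]
      omega
    unfold I23upTo at ih ⊢
    rw [hIcc, Finset.filter_insert]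
    have hr : n % 6 = 0 ∨ n % 6 = 1 ∨ n % 6 = 2 ∨ n % 6 = 3 ∨ n % 6 = 4 ∨ n % 6 = 5 := by omega
    split_ifs with h
    · rw [Finset.card_insert_of_notMem (by simp), ih]
      rcases hr with hr | hr | hr | hr | hr | hr <;> omega
    · rw [ih]
      rcases hr with hr | hr | hr | hr | hr | hr <;> omega

lemma abs_card_I23upTo_div_sub_le (Q q : ℕ) (hq : 0 < q) :
    |((I23upTo (Q / q)).card : ℝ) - 1 / 3 * ((Q : ℝ) / q)| ≤ 2 := by
  have hq' : (0 : ℝ) < q := by exact_mod_cast hq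
  have h1 : ((Q / q : ℕ) : ℝ) ≤ (Q : ℝ) / q := Nat.cast_div_le
  have h2 : (Q : ℝ) / q < ((Q / q : ℕ) : ℝ) + 1 := by
    rw [div_lt_iff₀ hq']
    exact_mod_cast Nat.lt_mul_of_div_lt (Nat.lt_succ_self (Q / q)) hq
  have hc := card_I23upTo (Q / q)
  have h3 : 3 * (I23upTo (Q / q)).card ≤ Q / q + 3 := by omega
  have h4 : Q / q ≤ 3 * (I23upTo (Q / q)).card + 3 := by omega
  have h3' : 3 * ((I23upTo (Q / q)).card : ℝ) ≤ ((Q / q : ℕ) : ℝ) + 3 := by exact_mod_cast h3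
  have h4' : ((Q / q : ℕ) : ℝ) ≤ 3 * ((I23upTo (Q / q)).card : ℝ) + 3 := by exact_mod_cast h4
  rw [abs_le]
  constructor <;> linarith

lemma alpha23_add (k K : ℕ) :
    alpha23 k K + (I23upTo (q23 K / q23 (k + 1))).card = (I23upTo (q23 K / q23 k)).card := by
  have hk := M23_pos (M23_q23 k)
  have hk1 := M23_pos (M23_q23 (k + 1))
  have hsub : I23upTo (q23 K / q23 (k + 1)) ⊆ I23upTo (q23 K / q23 k) := by
    intro i hi
    rw [mem_I23upTo] at hi ⊢
    exact ⟨hi.1, hi.2.trans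
      (Nat.div_le_div_left (q23_strictMono.monotone (Nat.le_succ k)) hk)⟩
  have hset : {i : ℕ | I23 i ∧ i ≤ q23 K ∧ qmax23 K i = q23 k} =
      ((I23upTo (q23 K / q23 k) \ I23upTo (q23 K / q23 (k + 1)) : Finset ℕ) : Set ℕ) := by
    ext i
    simp only [Set.mem_ofPred_eq, Finset.coe_sdiff, Set.mem_sdiff, Finset.mem_coe, mem_I23upTo,
      Nat.le_div_iff_mul_le hk, Nat.le_div_iff_mul_le hk1]
    constructor
    · rintro ⟨hI, hle, hq⟩
      rw [qmax23_eq_iff hI.1 hle] at hq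
      exact ⟨⟨hI, hq.1⟩, fun h => absurd hq.2 (not_lt.mpr h.2)⟩
    · rintro ⟨⟨hI, h1⟩, h2⟩
      have hle : i ≤ q23 K := (Nat.le_mul_of_pos_right i hk).trans h1
      exact ⟨hI, hle, (qmax23_eq_iff hI.1 hle).mpr ⟨h1, not_le.mp fun h => h2 ⟨hI, h⟩⟩⟩
  have hcard : alpha23 k K =
      (I23upTo (q23 K / q23 k) \ I23upTo (q23 K / q23 (k + 1))).card := by
    unfold alpha23
    rw [hset, Nat.card_coe_set_eq, Set.ncard_coe_finset]
  rw [hcard, Finset.card_sdiff_add_card_eq_card hsub]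

/-- For every `k ≥ 1` (here `k : ℕ` encodes the paper's index `k+1`),
`lim_{K→∞} α_k(K)/q_K = (1/3)·(1/q_k − 1/q_{k+1})`. -/
theorem alpha23_div_qK_tendsto (k : ℕ) :
    Tendsto (fun K : ℕ => (alpha23 k K : ℝ) / (q23 K : ℝ)) atTop
      (nhds ((1 / 3 : ℝ) * (1 / (q23 k : ℝ) - 1 / (q23 (k + 1) : ℝ)))) := by
  have hQ : Tendsto (fun K : ℕ => (q23 K : ℝ)) atTop atTop :=
    tendsto_natCast_atTop_atTop.comp q23_strictMono.tendsto_atTop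
  rw [tendsto_iff_dist_tendsto_zero]
  refine squeeze_zero (fun _ => dist_nonneg) (fun K => ?_) (hQ.const_div_atTop 4)
  have hK : (0 : ℝ) < q23 K := by exact_mod_cast M23_pos (M23_q23 K)
  have h1 := abs_card_I23upTo_div_sub_le (q23 K) (q23 k) (M23_pos (M23_q23 k))
  have h2 := abs_card_I23upTo_div_sub_le (q23 K) (q23 (k + 1)) (M23_pos (M23_q23 (k + 1)))
  have h3 : (alpha23 k K : ℝ) + ((I23upTo (q23 K / q23 (k + 1))).card : ℝ) =
      ((I23upTo (q23 K / q23 k)).card : ℝ) := by exact_mod_cast alpha23_add k K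
  have h4 : (alpha23 k K : ℝ) / q23 K - 1 / 3 * (1 / (q23 k : ℝ) - 1 / (q23 (k + 1) : ℝ)) =
      (alpha23 k K - (1 / 3 * ((q23 K : ℝ) / q23 k) - 1 / 3 * ((q23 K : ℝ) / q23 (k + 1))))
        / q23 K := by
    rw [sub_div _ _ (q23 K : ℝ)]
    congr 1
    rw [eq_div_iff hK.ne']
    ring
  rw [Real.dist_eq, h4, abs_div, abs_of_pos hK]
  gcongr
  rw [abs_le] at h1 h2 ⊢
  constructor <;> linarith [h1.1, h1.2, h2.1, h2.2]
end

section
/- The limit lim_{n→∞} (1/n)·log|X_{Γ;n}| exists and equals Σ_{k=1}^∞ β_Γ·(1/q_k − 1/q_{k+1})·log|Σ_k| (the series converges). -/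
/-!
Every positive integer is uniquely of the form `i·m` with `i ∈ I_Γ` and `m ∈ M_Γ`
(`exists_decomp`, `decomp_unique`; uniqueness uses pairwise coprimality). The constraint at
`k = i·m` only involves entries in the fibre `i·M_Γ`, so `X_{Γ;n}` is the product over
`i ∈ I_Γ ∩ [1, n]` of the sets of admissible configurations on `M_Γ ∩ [1, n/i]` (`card_XGam`).
Such a set is `Σ_k` when `q_k ≤ n/i < q_{k+1}`, hence (`log_card_XGam`)

  `log |X_{Γ;n}| = ∑_k #(I_Γ ∩ (n/q_{k+1}, n/q_k]) · log |Σ_k|`.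

`I_Γ` is periodic with period `γ_1⋯γ_d`, so after division by `n` the `k`-th term tends to
`β_Γ (1/q_k − 1/q_{k+1}) log |Σ_k|` (`tendsto_card_IFin_div`). Uniformly in `n` that term is at
most `(1/q_k) · k log 2`, because `|Σ_k| ≤ 2^k`, and `∑ k/q_k` converges since `∑ q_k^{-1/2}`,
a subseries of a finite Euler product, does (`summable_succ_div_qGam`). Dominated convergence
for series concludes.

The index `k` is 0-based in the code: `qGam d γ k` is `q_{k+1}` and `SigGam d γ k` is `Σ_{k+1}`,
so the bounds there carry `k + 1` in place of `k`.
-/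

open Filter Topology

/-- Membership in `M_Γ = {γ_1^{m_1}⋯γ_d^{m_d}}` (here there are `d+2` exponents,
encoding the paper's assumption `d ≥ 2`). -/
def MGam (d : ℕ) (γ : Fin (d + 2) → ℕ) (m : ℕ) : Prop :=
  ∃ e : Fin (d + 2) → ℕ, m = ∏ j, γ j ^ e j

/-- `qGam d γ k` is the `(k+1)`-st element of `M_Γ` in increasing order
(so `qGam d γ 0 = q_1 = 1`). -/
noncomputable def qGam (d : ℕ) (γ : Fin (d + 2) → ℕ) (k : ℕ) : ℕ := Nat.nth (MGam d γ) k

/-- `I_Γ` : positive integers divisible by no `γ_j`. -/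
def IGam (d : ℕ) (γ : Fin (d + 2) → ℕ) (i : ℕ) : Prop := 0 < i ∧ ∀ j, ¬ γ j ∣ i

/-- `β_Γ = #(I_Γ ∩ [1, γ_1⋯γ_d]) / (γ_1⋯γ_d)`. -/
noncomputable def betaGam (d : ℕ) (γ : Fin (d + 2) → ℕ) : ℝ :=
  (Nat.card {i : ℕ | IGam d γ i ∧ i ≤ ∏ j, γ j} : ℝ) / ((∏ j, γ j : ℕ) : ℝ)

/-- `Σ_k` : functions `U : {m ∈ M_Γ : m ≤ q_k} → {0,1}` (encoded as functions
`ℕ → ℕ` bounded by `1` and vanishing outside the domain) with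
`U(m)·U(γ_1 m)·⋯·U(γ_d m) = 0` for every `m ∈ M_Γ` with `γ_d·m ≤ q_k`. -/
def SigGam (d : ℕ) (γ : Fin (d + 2) → ℕ) (k : ℕ) : Set (ℕ → ℕ) :=
  {U | (∀ m, U m ≤ 1) ∧
       (∀ m, MGam d γ m → γ (Fin.last (d + 1)) * m ≤ qGam d γ k →
          U m * ∏ j, U (γ j * m) = 0) ∧
       (∀ m, ¬(MGam d γ m ∧ m ≤ qGam d γ k) → U m = 0)}

/-- `X_{Γ;n}` : functions `x : {1,…,n} → {0,1}` with `x_k·x_{γ_1 k}⋯x_{γ_d k} = 0`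
for every `k ≥ 1` with `γ_d·k ≤ n`. -/
def XGam (d : ℕ) (γ : Fin (d + 2) → ℕ) (n : ℕ) : Set (ℕ → ℕ) :=
  {x | (∀ m, x m ≤ 1) ∧
       (∀ k, 1 ≤ k → γ (Fin.last (d + 1)) * k ≤ n → x k * ∏ j, x (γ j * k) = 0) ∧
       (∀ m, m = 0 ∨ n < m → x m = 0)}

/-! ### The multiplicative monoid `M_Γ` and its enumeration -/

section Monoid

variable {d : ℕ} {γ : Fin (d + 2) → ℕ}

lemma MGam_one : MGam d γ 1 := ⟨0, by simp⟩

lemma MGam_mul_gen {m : ℕ} (hm : MGam d γ m) (j : Fin (d + 2)) : MGam d γ (γ j * m) := by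
  obtain ⟨e, rfl⟩ := hm
  refine ⟨e + Pi.single j 1, ?_⟩
  simp only [Pi.add_apply, pow_add, Finset.prod_mul_distrib]
  rw [mul_comm, Finset.prod_eq_single j (f := fun i => γ i ^ (Pi.single j 1 : Fin (d + 2) → ℕ) i)]
  · simp
  · intro b _ hb
    simp [Pi.single_eq_of_ne hb]
  · simp

lemma MGam_pos (hγ : ∀ j, 1 < γ j) {m : ℕ} (hm : MGam d γ m) : 0 < m := by
  obtain ⟨e, rfl⟩ := hm
  exact Finset.prod_pos fun j _ => pow_pos (by have := hγ j; omega) _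

lemma MGam_infinite (hγ : ∀ j, 1 < γ j) : {m | MGam d γ m}.Infinite := by
  refine Set.infinite_of_injective_forall_mem (f := fun n : ℕ => γ 0 ^ n)
    (Nat.pow_right_injective (hγ 0)) fun n => ?_
  change MGam d γ (γ 0 ^ n)
  induction n with
  | zero => simpa using MGam_one
  | succ n ih => simpa only [pow_succ'] using MGam_mul_gen ih 0

lemma qGam_strictMono (hγ : ∀ j, 1 < γ j) : StrictMono (qGam d γ) :=
  Nat.nth_strictMono (MGam_infinite hγ)

lemma MGam_qGam (hγ : ∀ j, 1 < γ j) (k : ℕ) : MGam d γ (qGam d γ k) :=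
  Nat.nth_mem_of_infinite (MGam_infinite hγ) k

lemma qGam_pos (hγ : ∀ j, 1 < γ j) (k : ℕ) : 0 < qGam d γ k := MGam_pos hγ (MGam_qGam hγ k)

lemma exists_qGam_eq (hγ : ∀ j, 1 < γ j) {m : ℕ} (hm : MGam d γ m) : ∃ k, qGam d γ k = m := by
  have := Nat.range_nth_of_infinite (MGam_infinite hγ)
  exact this.symm.subset hm

lemma qGam_zero (hγ : ∀ j, 1 < γ j) : qGam d γ 0 = 1 := by
  obtain ⟨k, hk⟩ := exists_qGam_eq hγ (MGam_one (d := d) (γ := γ))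
  have h1 := (qGam_strictMono hγ).monotone (Nat.zero_le k)
  have h2 := qGam_pos hγ 0
  omega

lemma exists_qGam_bracket (hγ : ∀ j, 1 < γ j) {N : ℕ} (hN : 0 < N) :
    ∃ k, qGam d γ k ≤ N ∧ N < qGam d γ (k + 1) := by
  classical
  have hex : ∃ k, N < qGam d γ k :=
    ⟨N + 1, lt_of_lt_of_le (Nat.lt_succ_self N) (qGam_strictMono hγ).le_apply⟩
  have hpos : Nat.find hex ≠ 0 := by
    intro h
    have := Nat.find_spec hex
    rw [h, qGam_zero hγ] at this
    omega
  obtain ⟨k, hk⟩ := Nat.exists_eq_succ_of_ne_zero hpos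
  refine ⟨k, ?_, ?_⟩
  · exact not_lt.1 (Nat.find_min hex (by omega))
  · simpa [hk] using Nat.find_spec hex

lemma MGam_le_iff_of_bracket (hγ : ∀ j, 1 < γ j) {N k m : ℕ} (hm : MGam d γ m)
    (h1 : qGam d γ k ≤ N) (h2 : N < qGam d γ (k + 1)) : m ≤ N ↔ m ≤ qGam d γ k := by
  obtain ⟨l, rfl⟩ := exists_qGam_eq hγ hm
  refine ⟨fun h => ?_, fun h => h.trans h1⟩
  have := (qGam_strictMono hγ).lt_iff_lt.1 (h.trans_lt h2)
  exact (qGam_strictMono hγ).monotone (Nat.lt_succ_iff.1 this)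

lemma bracket_unique (hγ : ∀ j, 1 < γ j) {N k l : ℕ}
    (h1 : qGam d γ k ≤ N) (h2 : N < qGam d γ (k + 1))
    (h3 : qGam d γ l ≤ N) (h4 : N < qGam d γ (l + 1)) : k = l := by
  have a := (qGam_strictMono hγ).lt_iff_lt.1 (h1.trans_lt h4)
  have b := (qGam_strictMono hγ).lt_iff_lt.1 (h3.trans_lt h2)
  omega

lemma exists_decomp (hγ : ∀ j, 1 < γ j) {n : ℕ} (hn : 0 < n) :
    ∃ i m, IGam d γ i ∧ MGam d γ m ∧ i * m = n := by
  induction n using Nat.strong_induction_on with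
  | _ n ih =>
    by_cases h : ∃ j, γ j ∣ n
    · obtain ⟨j, a, rfl⟩ := h
      have ha : 0 < a := Nat.pos_of_mul_pos_left hn
      obtain ⟨i, m, hi, hm, rfl⟩ := ih a (by nlinarith [hγ j]) ha
      exact ⟨i, γ j * m, hi, MGam_mul_gen hm j, by ring⟩
    · push Not at h
      exact ⟨n, 1, ⟨hn, h⟩, MGam_one, by simp⟩

/-- If `γ_j` occurred with a larger exponent on the right, then `γ_j ^ (e j + 1)` would divide
`i · ∏ γ_l ^ e l`, and cancelling `γ_j ^ e j` and the other generators (coprime to `γ_j`) would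
leave `γ_j ∣ i`. -/
lemma exponent_le (hγ : ∀ j, 1 < γ j) (hcop : ∀ i j, i ≠ j → Nat.Coprime (γ i) (γ j))
    {i i' : ℕ} (hi : IGam d γ i) (e e' : Fin (d + 2) → ℕ)
    (h : i * ∏ j, γ j ^ e j = i' * ∏ j, γ j ^ e' j) (j : Fin (d + 2)) : e' j ≤ e j := by
  classical
  by_contra hlt
  push Not at hlt
  have hdvd : γ j ^ (e j + 1) ∣ i * ∏ j, γ j ^ e j := by
    rw [h]
    exact Dvd.dvd.mul_left ((pow_dvd_pow _ hlt).trans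
      (Finset.dvd_prod_of_mem (fun j => γ j ^ e' j) (Finset.mem_univ j))) _
  rw [← Finset.mul_prod_erase Finset.univ _ (Finset.mem_univ j), pow_succ,
    mul_left_comm] at hdvd
  have h2 := Nat.dvd_of_mul_dvd_mul_left (pow_pos (by have := hγ j; omega) _) hdvd
  have hc : Nat.Coprime (γ j) (∏ x ∈ Finset.univ.erase j, γ x ^ e x) := by
    refine Nat.Coprime.prod_right fun x hx => ?_
    exact Nat.Coprime.pow_right _ (hcop _ _ (Finset.ne_of_mem_erase hx).symm)
  exact hi.2 j (hc.dvd_of_dvd_mul_right h2)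

lemma decomp_unique (hγ : ∀ j, 1 < γ j) (hcop : ∀ i j, i ≠ j → Nat.Coprime (γ i) (γ j))
    {i i' m m' : ℕ} (hi : IGam d γ i) (hi' : IGam d γ i') (hm : MGam d γ m) (hm' : MGam d γ m')
    (h : i * m = i' * m') : i = i' ∧ m = m' := by
  have hpos := MGam_pos hγ hm
  obtain ⟨e, rfl⟩ := hm
  obtain ⟨e', rfl⟩ := hm'
  have he : e = e' := funext fun j =>
    le_antisymm (exponent_le hγ hcop hi' e' e h.symm j) (exponent_le hγ hcop hi e e' h j)
  subst he
  exact ⟨Nat.eq_of_mul_eq_mul_right hpos h, rfl⟩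

end Monoid

/-! ### Growth of `q_k` -/

section Growth

variable {d : ℕ} {γ : Fin (d + 2) → ℕ}

/-- `∑ q_k^{-1/2}` converges: every element of `M_Γ` is a smooth number for the bound
`γ_1⋯γ_d + 1`, and the corresponding Euler product is finite. -/
lemma summable_rpow_qGam (hγ : ∀ j, 1 < γ j) :
    Summable fun k => (qGam d γ k : ℝ) ^ (-(1 / 2) : ℝ) := by
  let f : ℕ →* ℝ :=
    { toFun := fun n => (n : ℝ) ^ (-(1 / 2) : ℝ)
      map_one' := by simp
      map_mul' := fun a b => by
        push_cast
        exact Real.mul_rpow (Nat.cast_nonneg _) (Nat.cast_nonneg _) }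
  have hf : ∀ {p : ℕ}, p.Prime → ‖f p‖ < 1 := by
    intro p hp
    have : f p = (p : ℝ) ^ (-(1 / 2) : ℝ) := rfl
    rw [this, Real.norm_of_nonneg (Real.rpow_nonneg (Nat.cast_nonneg _) _)]
    exact Real.rpow_lt_one_of_one_lt_of_neg (by exact_mod_cast hp.one_lt) (by norm_num)
  have hs := (EulerProduct.summable_and_hasSum_smoothNumbers_prod_primesBelow_geometric hf
    ((∏ j, γ j) + 1)).1
  have hmem : ∀ k, qGam d γ k ∈ Nat.smoothNumbers ((∏ j, γ j) + 1) := by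
    intro k
    rw [Nat.mem_smoothNumbers']
    intro p hp hdvd
    obtain ⟨e, he⟩ := MGam_qGam hγ k
    rw [he] at hdvd
    obtain ⟨j, -, hj⟩ := (Prime.dvd_finsetProd_iff hp.prime _).1 hdvd
    have h1 : p ∣ ∏ j, γ j :=
      (hp.dvd_of_dvd_pow hj).trans (Finset.dvd_prod_of_mem γ (Finset.mem_univ j))
    exact Nat.lt_succ_of_le (Nat.le_of_dvd
      (Finset.prod_pos fun j _ => by have := hγ j; omega) h1)
  have hinj : Function.Injective fun k => (⟨qGam d γ k, hmem k⟩ :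
      Nat.smoothNumbers ((∏ j, γ j) + 1)) := fun a b hab =>
    (qGam_strictMono hγ).injective (congrArg Subtype.val hab)
  refine (hs.comp_injective hinj).congr fun k => ?_
  exact Real.norm_of_nonneg (Real.rpow_nonneg (Nat.cast_nonneg _) _)

/-- Monotonicity turns the convergence of `∑ q_k^{-1/2} = S` into `(k+1)·q_k^{-1/2} ≤ S`, and
multiplying by `q_k^{-1/2}` bounds `(k+1)/q_k` by a summable sequence. -/
lemma summable_succ_div_qGam (hγ : ∀ j, 1 < γ j) :
    Summable fun k : ℕ => ((k : ℝ) + 1) / (qGam d γ k : ℝ) := by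
  have hs := summable_rpow_qGam (d := d) hγ
  set S := ∑' k, (qGam d γ k : ℝ) ^ (-(1 / 2) : ℝ) with hS
  refine Summable.of_nonneg_of_le (fun k => by positivity) (fun k => ?_) (hs.mul_left S)
  have hq : (0 : ℝ) < qGam d γ k := by exact_mod_cast qGam_pos hγ k
  have hbound : ((k : ℝ) + 1) * (qGam d γ k : ℝ) ^ (-(1 / 2) : ℝ) ≤ S := by
    calc ((k : ℝ) + 1) * (qGam d γ k : ℝ) ^ (-(1 / 2) : ℝ)
        = ∑ _l ∈ Finset.range (k + 1), (qGam d γ k : ℝ) ^ (-(1 / 2) : ℝ) := by simp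
      _ ≤ ∑ l ∈ Finset.range (k + 1), (qGam d γ l : ℝ) ^ (-(1 / 2) : ℝ) := by
        refine Finset.sum_le_sum fun l hl => ?_
        refine Real.rpow_le_rpow_of_nonpos (by exact_mod_cast qGam_pos hγ l) ?_ (by norm_num)
        exact_mod_cast (qGam_strictMono hγ).monotone (Nat.lt_succ_iff.1 (Finset.mem_range.1 hl))
      _ ≤ S := hs.sum_le_tsum _ fun l _ => Real.rpow_nonneg (Nat.cast_nonneg _) _
  have hsplit : ((k : ℝ) + 1) / (qGam d γ k : ℝ) =
      ((k : ℝ) + 1) * (qGam d γ k : ℝ) ^ (-(1 / 2) : ℝ) * (qGam d γ k : ℝ) ^ (-(1 / 2) : ℝ) := by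
    rw [mul_assoc, ← Real.rpow_add hq]
    norm_num [Real.rpow_neg_one, div_eq_mul_inv]
  rw [hsplit]
  exact mul_le_mul_of_nonneg_right hbound (Real.rpow_nonneg hq.le _)

end Growth

/-! ### The density of `I_Γ` -/

section Density

open Classical in
/-- The elements of `I_Γ` in `[1, N]` (`0` is never in `I_Γ`). -/
noncomputable def IFin (d : ℕ) (γ : Fin (d + 2) → ℕ) (N : ℕ) : Finset ℕ :=
  (Finset.range (N + 1)).filter (IGam d γ)

variable {d : ℕ} {γ : Fin (d + 2) → ℕ}

lemma mem_IFin {N i : ℕ} : i ∈ IFin d γ N ↔ IGam d γ i ∧ i ≤ N := by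
  simp [IFin, and_comm]

lemma IFin_mono {M N : ℕ} (h : M ≤ N) : IFin d γ M ⊆ IFin d γ N := fun i hi => by
  rw [mem_IFin] at hi ⊢
  exact ⟨hi.1, hi.2.trans h⟩

lemma IGam_iff {i : ℕ} : IGam d γ i ↔ ∀ j, ¬ γ j ∣ i := by
  refine ⟨fun h => h.2, fun h => ⟨Nat.pos_of_ne_zero ?_, h⟩⟩
  rintro rfl
  exact h 0 (dvd_zero _)

lemma IGam_add_period (i : ℕ) : IGam d γ ((∏ j, γ j) + i) ↔ IGam d γ i := by
  rw [IGam_iff, IGam_iff]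
  refine forall_congr' fun j => not_congr ?_
  exact (Nat.dvd_add_iff_right (Finset.dvd_prod_of_mem γ (Finset.mem_univ j))).symm

open Classical in
lemma count_IGam_period_mul_add (q r : ℕ) :
    Nat.count (IGam d γ) ((∏ j, γ j) * q + r) =
      q * Nat.count (IGam d γ) (∏ j, γ j) + Nat.count (IGam d γ) r := by
  induction q with
  | zero => simp
  | succ q ih =>
    rw [show (∏ j, γ j) * (q + 1) + r = (∏ j, γ j) + ((∏ j, γ j) * q + r) by ring, Nat.count_add]
    simp only [IGam_add_period]
    rw [ih]
    ring

open Classical in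
lemma betaGam_eq_count : betaGam d γ =
    (Nat.count (IGam d γ) (∏ j, γ j) : ℝ) / ((∏ j, γ j : ℕ) : ℝ) := by
  -- The right endpoint `∏ γ_j` is itself a multiple of each `γ_j`, so it may be dropped.
  have hP : ¬ IGam d γ (∏ j, γ j) := fun h =>
    h.2 0 (Finset.dvd_prod_of_mem γ (Finset.mem_univ 0))
  have h1 : {i : ℕ | IGam d γ i ∧ i ≤ ∏ j, γ j} = (IFin d γ (∏ j, γ j) : Set ℕ) := by
    ext i
    simp [mem_IFin]
  have h2 : (IFin d γ (∏ j, γ j)).card = Nat.count (IGam d γ) (∏ j, γ j) := by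
    rw [IFin, ← Nat.count_eq_card_filter_range, Nat.count_succ]
    simp [hP]
  rw [betaGam, h1]
  simp [h2]

lemma betaGam_nonneg : 0 ≤ betaGam d γ := by unfold betaGam; positivity

lemma betaGam_le_one : betaGam d γ ≤ 1 := by
  classical
  rw [betaGam_eq_count]
  exact div_le_one_of_le₀ (by exact_mod_cast Nat.count_le _) (by positivity)

open Classical in
lemma abs_count_sub_le (hγ : ∀ j, 1 < γ j) (n : ℕ) :
    |(Nat.count (IGam d γ) n : ℝ) - betaGam d γ * n| ≤ ((∏ j, γ j : ℕ) : ℝ) := by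
  have hP : 0 < ∏ j, γ j := Finset.prod_pos fun j _ => by have := hγ j; omega
  have hβ0 := betaGam_nonneg (d := d) (γ := γ)
  have hβ1 := betaGam_le_one (d := d) (γ := γ)
  have hβ := betaGam_eq_count (d := d) (γ := γ)
  have hc := count_IGam_period_mul_add (d := d) (γ := γ) (n / ∏ j, γ j) (n % ∏ j, γ j)
  rw [Nat.div_add_mod] at hc
  have hr := Nat.mod_lt n hP
  have hn := Nat.div_add_mod n (∏ j, γ j)
  have hcr : Nat.count (IGam d γ) (n % ∏ j, γ j) ≤ n % ∏ j, γ j := Nat.count_le _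
  generalize (∏ j, γ j) = P at *
  generalize n % P = r at *
  generalize n / P = q at *
  have hP' : (0 : ℝ) < P := by exact_mod_cast hP
  have hβP : betaGam d γ * P = Nat.count (IGam d γ) P := by
    rw [hβ]
    field_simp
  have hr' : (r : ℝ) ≤ P := by exact_mod_cast hr.le
  have hcr' : (Nat.count (IGam d γ) r : ℝ) ≤ r := by exact_mod_cast hcr
  have hr0 : (0 : ℝ) ≤ r := Nat.cast_nonneg _
  have hc0 : (0 : ℝ) ≤ Nat.count (IGam d γ) r := Nat.cast_nonneg _
  have key : (Nat.count (IGam d γ) n : ℝ) - betaGam d γ * n =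
      Nat.count (IGam d γ) r - betaGam d γ * r := by
    rw [hc, ← hn]
    push_cast
    rw [← hβP]
    ring
  rw [key, abs_le]
  constructor <;> nlinarith

lemma tendsto_card_IFin_div (hγ : ∀ j, 1 < γ j) {m : ℕ} (hm : 0 < m) :
    Tendsto (fun n : ℕ => ((IFin d γ (n / m)).card : ℝ) / n) atTop
      (𝓝 (betaGam d γ * (1 / (m : ℝ)))) := by
  classical
  rw [tendsto_iff_norm_sub_tendsto_zero]
  refine squeeze_zero' (Eventually.of_forall fun n => norm_nonneg _)
    (g := fun n : ℕ => (((∏ j, γ j : ℕ) : ℝ) + 1) / n) ?_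
    (tendsto_const_div_atTop_nhds_zero_nat _)
  filter_upwards [eventually_gt_atTop 0] with n hn
  have hn' : (0 : ℝ) < n := by exact_mod_cast hn
  have hm' : (0 : ℝ) < m := by exact_mod_cast hm
  have hcard : (IFin d γ (n / m)).card = Nat.count (IGam d γ) (n / m + 1) := by
    rw [IFin, Nat.count_eq_card_filter_range]
  have h1 := abs_le.1 (abs_count_sub_le (d := d) hγ (n / m + 1))
  have hβ0 := betaGam_nonneg (d := d) (γ := γ)
  have hβ1 := betaGam_le_one (d := d) (γ := γ)
  -- `0 < ⌊n/m⌋ + 1 - n/m ≤ 1`, and `β ≤ 1`.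
  have h2 : ((n / m : ℕ) : ℝ) ≤ (n : ℝ) / m := Nat.cast_div_le
  have h3 : (n : ℝ) / m < ((n / m : ℕ) : ℝ) + 1 := by
    rw [div_lt_iff₀ hm']
    have := Nat.lt_mul_div_succ n hm
    have h4 : (n : ℝ) < m * (((n / m : ℕ) : ℝ) + 1) := by exact_mod_cast this
    linarith
  have h5 : ((IFin d γ (n / m)).card : ℝ) / n - betaGam d γ * (1 / (m : ℝ)) =
      ((Nat.count (IGam d γ) (n / m + 1) : ℝ) - betaGam d γ * ((n : ℝ) / m)) / n := by
    rw [hcard]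
    field_simp
  rw [h5, Real.norm_eq_abs, abs_div, abs_of_pos hn']
  refine div_le_div_of_nonneg_right ?_ hn'.le
  rw [Nat.cast_add, Nat.cast_one] at h1
  rw [abs_le]
  constructor <;> nlinarith [h1.1, h1.2]

end Density

/-! ### Factorising `X_{Γ;n}` along the multiplicative fibres -/

section Fibre

/-- `Σ(N)`: the analogue of `Σ_k` for configurations on `M_Γ ∩ [1, N]` with an arbitrary
cutoff `N`, so that `Σ_k = Σ(q_k)`. -/
def SigN (d : ℕ) (γ : Fin (d + 2) → ℕ) (N : ℕ) : Set (ℕ → ℕ) :=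
  {U | (∀ m, U m ≤ 1) ∧
       (∀ m, MGam d γ m → γ (Fin.last (d + 1)) * m ≤ N → U m * ∏ j, U (γ j * m) = 0) ∧
       (∀ m, ¬(MGam d γ m ∧ m ≤ N) → U m = 0)}

variable {d : ℕ} {γ : Fin (d + 2) → ℕ}

/-- `Σ(N)` only depends on which elements of `M_Γ` are at most `N`. -/
lemma SigN_eq_of_bracket (hγ : ∀ j, 1 < γ j) {N k : ℕ}
    (h1 : qGam d γ k ≤ N) (h2 : N < qGam d γ (k + 1)) : SigN d γ N = SigGam d γ k := by
  ext U
  refine and_congr Iff.rfl (and_congr (forall_congr' fun m => ?_) (forall_congr' fun m => ?_))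
  · refine forall_congr' fun hm => ?_
    rw [MGam_le_iff_of_bracket hγ (MGam_mul_gen hm _) h1 h2]
  · have : (MGam d γ m ∧ m ≤ N) ↔ (MGam d γ m ∧ m ≤ qGam d γ k) :=
      and_congr_right fun hm => MGam_le_iff_of_bracket hγ hm h1 h2
    rw [this]

/-- A configuration in `Σ_k` is determined by its values at `q_1, …, q_{k+1}`
(0-based index `k`). -/
lemma SigGam_restrict_injective (hγ : ∀ j, 1 < γ j) (k : ℕ) :
    Function.Injective (fun (U : SigGam d γ k) (l : Fin (k + 1)) =>
      (⟨U.1 (qGam d γ l), Nat.lt_succ_of_le (U.2.1 _)⟩ : Fin 2)) := by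
  intro U V h
  refine Subtype.ext (funext fun m => ?_)
  by_cases hm : MGam d γ m ∧ m ≤ qGam d γ k
  · obtain ⟨l, rfl⟩ := exists_qGam_eq hγ hm.1
    have hl := (qGam_strictMono hγ).le_iff_le.1 hm.2
    exact congrArg Fin.val (congrFun h ⟨l, Nat.lt_succ_of_le hl⟩)
  · rw [U.2.2.2 m hm, V.2.2.2 m hm]

lemma card_SigGam_le (hγ : ∀ j, 1 < γ j) (k : ℕ) : Nat.card (SigGam d γ k) ≤ 2 ^ (k + 1) := by
  have := Nat.card_le_card_of_injective _ (SigGam_restrict_injective (d := d) hγ k)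
  simpa using this

lemma card_SigGam_pos (hγ : ∀ j, 1 < γ j) (k : ℕ) : 0 < Nat.card (SigGam d γ k) := by
  have : Finite (SigGam d γ k) := Finite.of_injective _ (SigGam_restrict_injective hγ k)
  have : Nonempty (SigGam d γ k) := ⟨⟨0, by simp [SigGam]⟩⟩
  exact Nat.card_pos

lemma log_card_SigGam_nonneg (k : ℕ) : 0 ≤ Real.log (Nat.card (SigGam d γ k)) :=
  Real.log_natCast_nonneg _

lemma log_card_SigGam_le (hγ : ∀ j, 1 < γ j) (k : ℕ) :
    Real.log (Nat.card (SigGam d γ k)) ≤ ((k : ℝ) + 1) * Real.log 2 := by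
  have h : Real.log (Nat.card (SigGam d γ k)) ≤ Real.log ((2 : ℝ) ^ (k + 1)) :=
    Real.log_le_log (by exact_mod_cast card_SigGam_pos hγ k)
      (by exact_mod_cast card_SigGam_le hγ k)
  rw [Real.log_pow] at h
  exact_mod_cast h

/-- Every positive integer is uniquely `i·m` with `i ∈ I_Γ`, `m ∈ M_Γ`, and the constraint at
`i·m` only involves the fibre `i·M_Γ`. So a configuration on `[1, n]` is an independent choice,
for each `i ∈ I_Γ ∩ [1, n]`, of an element of `Σ(⌊n/i⌋)`. -/
lemma card_XGam (hγ : ∀ j, 1 < γ j) (hcop : ∀ i j, i ≠ j → Nat.Coprime (γ i) (γ j)) (n : ℕ) :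
    Nat.card (XGam d γ n) = ∏ i ∈ IFin d γ n, Nat.card (SigN d γ (n / i)) := by
  classical
  have hdec : ∀ a : ℕ, ∃ i m, 0 < a → IGam d γ i ∧ MGam d γ m ∧ i * m = a := by
    intro a
    by_cases ha : 0 < a
    · obtain ⟨i, m, h⟩ := exists_decomp (d := d) hγ ha
      exact ⟨i, m, fun _ => h⟩
    · exact ⟨0, 0, fun h => absurd h ha⟩
  choose ι μ hιμ using hdec
  have hfib : ∀ {i m : ℕ}, IGam d γ i → MGam d γ m → ι (i * m) = i ∧ μ (i * m) = m := by
    intro i m hi hm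
    obtain ⟨h1, h2, h3⟩ := hιμ (i * m) (Nat.mul_pos hi.1 (MGam_pos hγ hm))
    exact decomp_unique hγ hcop h1 hi h2 hm h3
  let toFun : XGam d γ n → (∀ i : IFin d γ n, SigN d γ (n / i)) := fun x i =>
    ⟨fun m => if MGam d γ m then x.1 (i * m) else 0, by
      have hi := mem_IFin.1 i.2
      refine ⟨fun m => ?_, fun m hm hle => ?_, fun m hm => ?_⟩
      · dsimp only
        split_ifs
        · exact x.2.1 _
        · exact zero_le_one
      · simp only [hm, MGam_mul_gen hm, if_true]
        have := x.2.2.1 (i * m) (Nat.mul_pos hi.1.1 (MGam_pos hγ hm)) (by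
          rw [Nat.le_div_iff_mul_le hi.1.1] at hle
          calc _ = γ (Fin.last (d + 1)) * m * i := by ring
            _ ≤ n := hle)
        simpa only [mul_left_comm] using this
      · dsimp only
        split_ifs with h
        · refine x.2.2.2 _ (Or.inr ?_)
          by_contra hcon
          exact hm ⟨h, (Nat.le_div_iff_mul_le hi.1.1).2 (by rw [mul_comm]; exact not_lt.1 hcon)⟩
        · rfl⟩
  have hmem : ∀ {a : ℕ}, 0 < a → a ≤ n → ι a ∈ IFin d γ n := by
    intro a ha han
    obtain ⟨h1, h2, h3⟩ := hιμ a ha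
    refine mem_IFin.2 ⟨h1, le_trans ?_ han⟩
    calc ι a = ι a * 1 := (mul_one _).symm
      _ ≤ ι a * μ a := Nat.mul_le_mul_left _ (MGam_pos hγ h2)
      _ = a := h3
  have hbij : Function.Bijective toFun := by
    constructor
    · intro x y hxy
      refine Subtype.ext (funext fun a => ?_)
      by_cases ha : a = 0 ∨ n < a
      · rw [x.2.2.2 a ha, y.2.2.2 a ha]
      · push Not at ha
        have hpos := Nat.pos_of_ne_zero ha.1
        obtain ⟨h1, h2, h3⟩ := hιμ a hpos
        have := congrFun (congrArg Subtype.val (congrFun hxy ⟨ι a, hmem hpos ha.2⟩)) (μ a)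
        simpa only [toFun, h2, if_true, h3] using this
    · intro U
      let x : ℕ → ℕ := fun a =>
        if h : 0 < a ∧ a ≤ n then (U ⟨ι a, hmem h.1 h.2⟩).1 (μ a) else 0
      have hx : ∀ (i : IFin d γ n) {m : ℕ}, MGam d γ m → x (i * m) = (U i).1 m := by
        intro i m hm
        have hi := mem_IFin.1 i.2
        have hpos := Nat.mul_pos hi.1.1 (MGam_pos hγ hm)
        obtain ⟨e1, e2⟩ := hfib hi.1 hm
        by_cases hle : i * m ≤ n
        · have : (⟨ι (i * m), hmem hpos hle⟩ : IFin d γ n) = i := Subtype.ext e1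
          simp only [x, dif_pos (And.intro hpos hle)]
          rw [e2]
          exact congrArg (fun t : IFin d γ n => (U t).1 m) this
        · simp only [x, dif_neg (fun h : 0 < (i : ℕ) * m ∧ (i : ℕ) * m ≤ n => hle h.2)]
          refine ((U i).2.2.2 m fun h => hle ?_).symm
          rw [mul_comm]
          exact (Nat.le_div_iff_mul_le hi.1.1).1 h.2
      have hxX : x ∈ XGam d γ n := by
        refine ⟨fun a => ?_, fun a ha hle => ?_, fun a ha => ?_⟩
        · dsimp only [x]
          split_ifs
          · exact (U _).2.1 _
          · exact zero_le_one
        · obtain ⟨h1, h2, h3⟩ := hιμ a ha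
          have han : a ≤ n := le_trans (Nat.le_mul_of_pos_left a
            (by have := hγ (Fin.last (d + 1)); omega)) hle
          have hi := hmem ha han
          have e0 := hx ⟨ι a, hi⟩ h2
          have ej := fun j => hx ⟨ι a, hi⟩ (MGam_mul_gen h2 j)
          simp only [mul_left_comm (ι a), h3] at e0 ej
          rw [e0, Finset.prod_congr rfl fun j _ => ej j]
          refine (U ⟨ι a, hi⟩).2.2.1 (μ a) h2 ((Nat.le_div_iff_mul_le h1.1).2 ?_)
          calc _ = γ (Fin.last (d + 1)) * (ι a * μ a) := by ring
            _ ≤ n := by rw [h3]; exact hle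
        · exact dif_neg (by omega)
      refine ⟨⟨x, hxX⟩, funext fun i => Subtype.ext (funext fun m => ?_)⟩
      dsimp only [toFun]
      split_ifs with h
      · exact hx i h
      · exact ((U i).2.2.2 m fun hm => h hm.1).symm
  rw [Nat.card_congr (Equiv.ofBijective toFun hbij), Nat.card_pi,
    Finset.prod_coe_sort (IFin d γ n) fun i => Nat.card (SigN d γ (n / i))]

end Fibre

/-! ### Regrouping and passage to the limit -/

section Limit

variable {d : ℕ} {γ : Fin (d + 2) → ℕ}

/-- Grouping the fibres by the index `k` with `q_k ≤ ⌊n/i⌋ < q_{k+1}`: such `i` are exactly the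
elements of `I_Γ` in `(n/q_{k+1}, n/q_k]`. -/
lemma log_card_XGam (hγ : ∀ j, 1 < γ j) (hcop : ∀ i j, i ≠ j → Nat.Coprime (γ i) (γ j)) (n : ℕ) :
    Real.log (Nat.card (XGam d γ n)) =
      ∑' k, (((IFin d γ (n / qGam d γ k)).card : ℝ) - (IFin d γ (n / qGam d γ (k + 1))).card) *
        Real.log (Nat.card (SigGam d γ k)) := by
  classical
  have hbr : ∀ N : ℕ, ∃ k, 0 < N → qGam d γ k ≤ N ∧ N < qGam d γ (k + 1) := by
    intro N
    by_cases hN : 0 < N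
    · obtain ⟨k, hk⟩ := exists_qGam_bracket (d := d) hγ hN
      exact ⟨k, fun _ => hk⟩
    · exact ⟨0, fun h => absurd h hN⟩
  choose κ hκ using hbr
  have hquot : ∀ {i}, i ∈ IFin d γ n → 0 < n / i := fun hi => by
    rw [mem_IFin] at hi
    exact Nat.div_pos hi.2 hi.1.1
  have hlog : Real.log (Nat.card (XGam d γ n)) =
      ∑ i ∈ IFin d γ n, Real.log (Nat.card (SigGam d γ (κ (n / i)))) := by
    rw [card_XGam hγ hcop, Finset.prod_congr rfl fun i hi => by
      rw [SigN_eq_of_bracket hγ (hκ _ (hquot hi)).1 (hκ _ (hquot hi)).2]]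
    push_cast
    exact Real.log_prod fun i _ => by exact_mod_cast (card_SigGam_pos hγ _).ne'
  have hcount : ∀ k, (((IFin d γ n).filter fun i => κ (n / i) = k).card : ℝ) =
      ((IFin d γ (n / qGam d γ k)).card : ℝ) - (IFin d γ (n / qGam d γ (k + 1))).card := by
    intro k
    have hle : n / qGam d γ (k + 1) ≤ n / qGam d γ k :=
      Nat.div_le_div_left ((qGam_strictMono hγ).monotone (Nat.le_succ k)) (qGam_pos hγ k)
    have hset : (IFin d γ n).filter (fun i => κ (n / i) = k) =
        IFin d γ (n / qGam d γ k) \ IFin d γ (n / qGam d γ (k + 1)) := by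
      ext i
      have hswap : ∀ l, 0 < i → (i ≤ n / qGam d γ l ↔ qGam d γ l ≤ n / i) := fun l hi => by
        rw [Nat.le_div_iff_mul_le (qGam_pos hγ l), Nat.le_div_iff_mul_le hi, mul_comm]
      simp only [Finset.mem_filter, Finset.mem_sdiff]
      constructor
      · rintro ⟨hi, rfl⟩
        obtain ⟨h1, h2⟩ := hκ _ (hquot hi)
        have hi' := mem_IFin.1 hi
        refine ⟨mem_IFin.2 ⟨hi'.1, (hswap _ hi'.1.1).2 h1⟩, fun h => ?_⟩
        exact absurd ((hswap _ hi'.1.1).1 (mem_IFin.1 h).2) (not_le.2 h2)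
      · rintro ⟨h1, h2⟩
        have h1' := mem_IFin.1 h1
        have hi := IFin_mono (Nat.div_le_self n (qGam d γ k)) h1
        refine ⟨hi, ?_⟩
        obtain ⟨h3, h4⟩ := hκ _ (hquot hi)
        refine bracket_unique hγ h3 h4 ((hswap k h1'.1.1).1 h1'.2) (not_le.1 fun h => h2 ?_)
        exact mem_IFin.2 ⟨h1'.1, (hswap _ h1'.1.1).2 h⟩
    rw [hset, Finset.card_sdiff_of_subset (IFin_mono hle),
      Nat.cast_sub (Finset.card_le_card (IFin_mono hle))]
  simp only [← hcount]
  rw [hlog, Finset.sum_comp (fun k => Real.log (Nat.card (SigGam d γ k))) fun i => κ (n / i),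
    tsum_eq_sum (s := (IFin d γ n).image fun i => κ (n / i))]
  · simp only [nsmul_eq_mul]
  · intro k hk
    rw [Finset.filter_eq_empty_iff.2]
    · simp
    · intro i hi h
      exact hk (Finset.mem_image.2 ⟨i, hi, h⟩)

lemma card_IFin_le (N : ℕ) : (IFin d γ N).card ≤ N := by
  have h : IFin d γ N ⊆ Finset.Icc 1 N := fun i hi => by
    rw [mem_IFin] at hi
    exact Finset.mem_Icc.2 ⟨hi.1.1, hi.2⟩
  simpa using Finset.card_le_card h

end Limit

/-- For `1 < γ_1 < ⋯ < γ_d` pairwise coprime (`d ≥ 2`), the limit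
`lim_{n→∞} (1/n)·log|X_{Γ;n}|` exists and equals
`∑_{k=1}^∞ β_Γ·(1/q_k − 1/q_{k+1})·log|Σ_k|`, the series being convergent. -/
theorem entropy_XGam (d : ℕ) (γ : Fin (d + 2) → ℕ)
    (h1 : 1 < γ 0) (hmono : StrictMono γ)
    (hcop : ∀ i j, i ≠ j → Nat.Coprime (γ i) (γ j)) :
    Summable (fun k : ℕ => betaGam d γ *
      (1 / (qGam d γ k : ℝ) - 1 / (qGam d γ (k + 1) : ℝ)) *
      Real.log (Nat.card (SigGam d γ k))) ∧
    Tendsto (fun n : ℕ => Real.log (Nat.card (XGam d γ n)) / (n : ℝ)) atTop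
      (nhds (∑' k : ℕ, betaGam d γ *
        (1 / (qGam d γ k : ℝ) - 1 / (qGam d γ (k + 1) : ℝ)) *
        Real.log (Nat.card (SigGam d γ k)))) := by
  have hγ : ∀ j, 1 < γ j := fun j => h1.trans_le (hmono.monotone (Fin.zero_le j))
  set L : ℕ → ℝ := fun k => Real.log (Nat.card (SigGam d γ k)) with hL
  set A : ℕ → ℕ → ℝ := fun n k => ((IFin d γ (n / qGam d γ k)).card : ℝ) with hA
  set b : ℕ → ℝ := fun k => ((k : ℝ) + 1) / (qGam d γ k : ℝ) * Real.log 2 with hb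
  have hbsum : Summable b := (summable_succ_div_qGam hγ).mul_right _
  have hterm : ∀ k, Tendsto (fun n : ℕ => (A n k - A n (k + 1)) / n * L k) atTop
      (𝓝 (betaGam d γ * (1 / (qGam d γ k : ℝ) - 1 / (qGam d γ (k + 1) : ℝ)) * L k)) := by
    intro k
    have := ((tendsto_card_IFin_div hγ (qGam_pos hγ k)).sub
      (tendsto_card_IFin_div hγ (qGam_pos hγ (k + 1)))).mul_const (L k)
    simpa only [sub_div, mul_sub, hA] using this
  have hbound : ∀ n k : ℕ, ‖(A n k - A n (k + 1)) / n * L k‖ ≤ b k := by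
    intro n k
    have hq : (0 : ℝ) < qGam d γ k := by exact_mod_cast qGam_pos hγ k
    have hmonoA : A n (k + 1) ≤ A n k := by
      exact Nat.cast_le.2 (Finset.card_le_card (IFin_mono (Nat.div_le_div_left
        ((qGam_strictMono hγ).monotone (Nat.le_succ k)) (qGam_pos hγ k))))
    have hA0 : 0 ≤ A n (k + 1) := Nat.cast_nonneg _
    have hA1 : A n k ≤ (n : ℝ) / qGam d γ k :=
      (Nat.cast_le.2 (card_IFin_le _)).trans Nat.cast_div_le
    have hL0 : 0 ≤ L k := log_card_SigGam_nonneg k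
    have hfrac0 : 0 ≤ (A n k - A n (k + 1)) / n := div_nonneg (by linarith) (Nat.cast_nonneg _)
    have hfrac : (A n k - A n (k + 1)) / n ≤ 1 / qGam d γ k := by
      refine div_le_of_le_mul₀ (Nat.cast_nonneg _) (by positivity) ?_
      calc A n k - A n (k + 1) ≤ (n : ℝ) / qGam d γ k := by linarith
        _ = 1 / qGam d γ k * n := by ring
    rw [Real.norm_of_nonneg (mul_nonneg hfrac0 hL0)]
    calc (A n k - A n (k + 1)) / n * L k
        ≤ 1 / qGam d γ k * (((k : ℝ) + 1) * Real.log 2) :=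
          mul_le_mul hfrac (log_card_SigGam_le hγ k) hL0 (by positivity)
      _ = b k := by simp only [hb]; ring
  refine ⟨Summable.of_norm_bounded hbsum fun k =>
    le_of_tendsto (hterm k).norm (Eventually.of_forall fun n => hbound n k), ?_⟩
  have hmain := tendsto_tsum_of_dominated_convergence hbsum hterm
    (Eventually.of_forall fun n k => hbound n k)
  refine hmain.congr fun n => ?_
  rw [log_card_XGam hγ hcop, ← tsum_div_const]
  exact tsum_congr fun k => by ring
end

section
/- Let k ≥ 1 and n ≥ k+1 be integers and set m* = ⌊(n−1)/k⌋ − 1 and α_k(n) = Σ_{j=0}^{m*} 2^{n−k(j+1)−1} (= 2^{n−k−1}·(1 + 2^{−k} + 2^{−2k} + ⋯ + 2^{−m*k})). Then there exists a set S of odd integers with |S| = α_k(n) such that every l ∈ S satisfies l ≥ 3 and 1 < m < 2^n for all m ∈ M_k(l), and for all distinct l, l' ∈ S the sets M_k(l) and M_k(l') are mutually independent: they are disjoint, no element of one differs by exactly 1 from an element of the other, and no element of one equals twice an element of the other. -/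
/-!
For odd `l = 2a + 1`, level `j` of the tree below `l` lies strictly between the consecutive
multiples `2^(j+1) a` and `2^(j+1) (a+1)` of `2^(j+1)`. Consequently every `m` in that level has
`⌊log₂ m⌋ = ⌊log₂ a⌋ + j + 1`, and it is not a multiple of `2^(j+1)`.

Take for `S` the numbers `2a + 1` with `⌊log₂ a⌋ = n - k(t+1) - 1`, for `0 ≤ t ≤ m*`; there are
`2^(n-k(t+1)-1)` of them for each `t`. All these logarithms are congruent mod `k`, so
`⌊log₂ m⌋` determines both the level `j < k` and `⌊log₂ a⌋`. Two elements that are equal or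
adjacent with equal logarithms then lie in the same gap between multiples of `2^(j+1)`, hence have
the same `a`. In adjacent elements with different logarithms the larger one is a power of two,
hence a multiple of the excluded `2^(j+1)`. Doubling an element of level `j` gives level `j + 1`
with the same `a`, or, if `j = k - 1`, an even number that would have to be in some level `0`,
where all elements are odd.
-/

/-- `V_j(l)` (0-indexed: `Vl l 0 = V_1(l) = {l}`,
`Vl l (j+1) = V_{j+2}(l) = {2i−1, 2i, 2i+1 : i ∈ V_{j+1}(l)}`). -/
def Vl (l : ℕ) : ℕ → Finset ℕ
  | 0 => {l}
  | j + 1 => (Vl l j).biUnion fun i => {2 * i - 1, 2 * i, 2 * i + 1}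

/-- `M_k(l) = V_1(l) ∪ ⋯ ∪ V_k(l)`. -/
def Ml (l k : ℕ) : Finset ℕ := (Finset.range k).biUnion (Vl l)

/-- `M` and `M'` are mutually independent: disjoint, with no element of one
differing by exactly 1 from an element of the other, and no element of one equal
to twice an element of the other. -/
def MutuallyIndependent (M M' : Finset ℕ) : Prop :=
  Disjoint M M' ∧ ∀ m ∈ M, ∀ m' ∈ M',
    (m' ≠ m + 1 ∧ m ≠ m' + 1) ∧ m' ≠ 2 * m ∧ m ≠ 2 * m'

lemma log_of_mem_Ico {e a : ℕ} (h : a ∈ Finset.Ico (2 ^ e) (2 ^ (e + 1))) : Nat.log 2 a = e := by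
  rw [Finset.mem_Ico] at h
  exact Nat.log_eq_of_pow_le_of_lt_pow h.1 h.2

/-- The integer `m` lies strictly between consecutive multiples `2^(j+1) a` and `2^(j+1) (a+1)`;
every element of `Vl (2a+1) j` does. -/
def InGap (a j m : ℕ) : Prop := 2 ^ (j + 1) * a < m ∧ m < 2 ^ (j + 1) * (a + 1)

lemma inGap_of_mem_Vl (a j : ℕ) : ∀ m ∈ Vl (2 * a + 1) j, InGap a j m := by
  induction j with
  | zero =>
    intro m hm
    simp only [Vl, Finset.mem_singleton] at hm
    constructor <;> simp <;> omega
  | succ j ih =>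
    intro m hm
    simp only [Vl, Finset.mem_biUnion, Finset.mem_insert, Finset.mem_singleton] at hm
    obtain ⟨i, hi, hm⟩ := hm
    obtain ⟨h1, h2⟩ := ih i hi
    have e1 : 2 ^ (j + 1 + 1) * a = 2 * (2 ^ (j + 1) * a) := by ring
    have e2 : 2 ^ (j + 1 + 1) * (a + 1) = 2 * (2 ^ (j + 1) * (a + 1)) := by ring
    constructor <;> omega

lemma InGap.log_eq {a j m : ℕ} (ha : 1 ≤ a) (h : InGap a j m) :
    Nat.log 2 m = Nat.log 2 a + (j + 1) := by
  obtain ⟨h1, h2⟩ := h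
  have l1 : 2 ^ Nat.log 2 a ≤ a := Nat.pow_log_le_self 2 (by omega)
  have l2 : a + 1 ≤ 2 ^ (Nat.log 2 a + 1) := Nat.lt_pow_succ_log_self (by norm_num) a
  apply Nat.log_eq_of_pow_le_of_lt_pow
  · calc 2 ^ (Nat.log 2 a + (j + 1)) = 2 ^ (j + 1) * 2 ^ Nat.log 2 a := by ring
      _ ≤ 2 ^ (j + 1) * a := by gcongr
      _ ≤ m := h1.le
  · calc m < 2 ^ (j + 1) * (a + 1) := h2
      _ ≤ 2 ^ (j + 1) * 2 ^ (Nat.log 2 a + 1) := by gcongr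
      _ = 2 ^ (Nat.log 2 a + (j + 1) + 1) := by ring

lemma InGap.not_dvd {a j m : ℕ} (h : InGap a j m) : ¬ 2 ^ (j + 1) ∣ m := by
  rintro ⟨c, rfl⟩
  have h1 := lt_of_mul_lt_mul_left h.1 (Nat.zero_le _)
  have h2 := lt_of_mul_lt_mul_left h.2 (Nat.zero_le _)
  omega

/-- The base-two logarithm determines the level when `⌊log₂ a⌋` is known mod `k`. -/
lemma level_eq {k a a' j j' : ℕ} (hmod : Nat.log 2 a ≡ Nat.log 2 a' [MOD k])
    (hj : j < k) (hj' : j' < k) (h : Nat.log 2 a + (j + 1) = Nat.log 2 a' + (j' + 1)) :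
    j = j' := by
  refine Nat.ModEq.eq_of_lt_of_lt (m := k) (Nat.ModEq.add_left_cancel hmod ?_) hj hj'
  rw [show Nat.log 2 a + j = Nat.log 2 a' + j' by omega]

lemma InGap.eq_of_near {a a' j m m' : ℕ} (h : InGap a j m) (h' : InGap a' j m')
    (h1 : m ≤ m') (h2 : m' ≤ m + 1) : a = a' := by
  obtain ⟨p, q⟩ := h
  obtain ⟨p', q'⟩ := h'
  rcases lt_trichotomy a a' with hlt | heq | hlt
  · have : 2 ^ (j + 1) * (a + 1) ≤ 2 ^ (j + 1) * a' := Nat.mul_le_mul_left _ hlt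
    omega
  · exact heq
  · have : 2 ^ (j + 1) * (a' + 1) ≤ 2 ^ (j + 1) * a := Nat.mul_le_mul_left _ hlt
    omega

lemma InGap.eq_of_adjacent {k a a' j j' m m' : ℕ} (ha : 1 ≤ a) (ha' : 1 ≤ a')
    (hmod : Nat.log 2 a ≡ Nat.log 2 a' [MOD k]) (hj : j < k) (hj' : j' < k)
    (h : InGap a j m) (h' : InGap a' j' m') (h1 : m ≤ m') (h2 : m' ≤ m + 1) : a = a' := by
  have hl := h.log_eq ha
  have hl' := h'.log_eq ha'
  by_cases hlog : Nat.log 2 m = Nat.log 2 m'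
  · obtain rfl := level_eq hmod hj hj' (by omega)
    exact h.eq_of_near h' h1 h2
  · exfalso
    -- The logarithm jumps between `m` and `m + 1`, so `m'` is a power of two.
    apply h'.not_dvd
    have hlt : Nat.log 2 m < Nat.log 2 m' :=
      lt_of_le_of_ne (Nat.log_mono_right h1) hlog
    have hm : m < 2 ^ Nat.log 2 m' := Nat.lt_pow_of_log_lt (by norm_num) hlt
    have hm0 : m' ≠ 0 := by have := h'.1; omega
    have hm' : 2 ^ Nat.log 2 m' ≤ m' := Nat.pow_log_le_self 2 hm0
    have he : m' = 2 ^ Nat.log 2 m' := by omega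
    rw [he]
    exact pow_dvd_pow 2 (by omega)

lemma InGap.eq_of_double {k a a' j j' m m' : ℕ} (ha : 1 ≤ a) (ha' : 1 ≤ a')
    (hmod : Nat.log 2 a ≡ Nat.log 2 a' [MOD k]) (hj : j < k) (hj' : j' < k)
    (h : InGap a j m) (h' : InGap a' j' m') (h2 : m' = 2 * m) : a = a' := by
  have hd : InGap a (j + 1) m' := by
    have e1 : 2 ^ (j + 1 + 1) * a = 2 * (2 ^ (j + 1) * a) := by ring
    have e2 : 2 ^ (j + 1 + 1) * (a + 1) = 2 * (2 ^ (j + 1) * (a + 1)) := by ring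
    obtain ⟨p, q⟩ := h
    constructor <;> omega
  have hl := hd.log_eq ha
  have hl' := h'.log_eq ha'
  cases j' with
  | zero => exact absurd ⟨m, by simpa using h2⟩ h'.not_dvd
  | succ i =>
    obtain rfl := level_eq (j := j) (j' := i) hmod hj (by omega) (by omega)
    exact hd.eq_of_near h' le_rfl (by omega)

lemma mutuallyIndependent_Ml {k a a' : ℕ} (ha : 1 ≤ a) (ha' : 1 ≤ a')
    (hmod : Nat.log 2 a ≡ Nat.log 2 a' [MOD k]) (hne : a ≠ a') :
    MutuallyIndependent (Ml (2 * a + 1) k) (Ml (2 * a' + 1) k) := by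
  have key : ∀ m ∈ Ml (2 * a + 1) k, ∀ m' ∈ Ml (2 * a' + 1) k,
      m ≠ m' ∧ (m' ≠ m + 1 ∧ m ≠ m' + 1) ∧ m' ≠ 2 * m ∧ m ≠ 2 * m' := by
    intro m hm m' hm'
    simp only [Ml, Finset.mem_biUnion, Finset.mem_range] at hm hm'
    obtain ⟨j, hj, hm⟩ := hm
    obtain ⟨j', hj', hm'⟩ := hm'
    have g := inGap_of_mem_Vl a j m hm
    have g' := inGap_of_mem_Vl a' j' m' hm'
    refine ⟨fun e => hne ?_, ⟨fun e => hne ?_, fun e => hne ?_⟩, fun e => hne ?_, fun e => hne ?_⟩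
    · exact g.eq_of_adjacent ha ha' hmod hj hj' g' (by omega) (by omega)
    · exact g.eq_of_adjacent ha ha' hmod hj hj' g' (by omega) (by omega)
    · exact (g'.eq_of_adjacent ha' ha hmod.symm hj' hj g (by omega) (by omega)).symm
    · exact g.eq_of_double ha ha' hmod hj hj' g' e
    · exact (g'.eq_of_double ha' ha hmod.symm hj' hj g e).symm
  refine ⟨Finset.disjoint_left.2 fun m hm hm' => (key m hm m hm').1 rfl, ?_⟩
  exact fun m hm x hx => (key m hm x hx).2

/-- The half-indices `a` of the chosen roots `2a + 1`: the dyadic blocks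
`2^e ≤ a < 2^(e+1)` with `e = n - k(t+1) - 1`, for `0 ≤ t ≤ m*`. -/
def halfRoots (k n : ℕ) : Finset ℕ :=
  (Finset.range ((n - 1) / k - 1 + 1)).biUnion fun t =>
    Finset.Ico (2 ^ (n - k * (t + 1) - 1)) (2 ^ (n - k * (t + 1) - 1 + 1))

/-- No truncated subtraction takes place in the exponents defining `halfRoots`. -/
lemma exponent_add {k n t : ℕ} (hk : 1 ≤ k) (hn : k + 1 ≤ n)
    (ht : t < (n - 1) / k - 1 + 1) : n - k * (t + 1) - 1 + k * (t + 1) = n - 1 := by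
  have h1 : 1 ≤ (n - 1) / k := (Nat.one_le_div_iff (by omega)).2 (by omega)
  have h2 : k * (t + 1) ≤ k * ((n - 1) / k) := Nat.mul_le_mul_left _ (by omega)
  have h3 := Nat.mul_div_le (n - 1) k
  omega

lemma card_halfRoots {k n : ℕ} (hk : 1 ≤ k) (hn : k + 1 ≤ n) :
    (halfRoots k n).card =
      ∑ j ∈ Finset.range ((n - 1) / k - 1 + 1), 2 ^ (n - k * (j + 1) - 1) := by
  rw [halfRoots, Finset.card_biUnion]
  · refine Finset.sum_congr rfl fun t _ => ?_
    rw [Nat.card_Ico, pow_succ]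
    omega
  · intro t ht t' ht' hne
    refine Finset.disjoint_left.2 ?_
    intro a h h'
    have e := exponent_add hk hn (Finset.mem_range.1 ht)
    have e' := exponent_add hk hn (Finset.mem_range.1 ht')
    have hl := log_of_mem_Ico h
    have hl' := log_of_mem_Ico h'
    have hmul : k * (t + 1) = k * (t' + 1) := by omega
    have := Nat.eq_of_mul_eq_mul_left (by omega) hmul
    omega

lemma log_of_mem_halfRoots {k n a : ℕ} (hk : 1 ≤ k) (hn : k + 1 ≤ n) (h : a ∈ halfRoots k n) :
    1 ≤ a ∧ Nat.log 2 a + k ≤ n - 1 ∧ Nat.log 2 a ≡ n - 1 [MOD k] := by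
  simp only [halfRoots, Finset.mem_biUnion] at h
  obtain ⟨t, ht, h⟩ := h
  have e := exponent_add hk hn (Finset.mem_range.1 ht)
  have hl := log_of_mem_Ico h
  rw [← hl] at e
  refine ⟨Nat.one_le_two_pow.trans (Finset.mem_Ico.1 h).1, ?_, ?_⟩
  · rw [Nat.mul_add] at e
    omega
  · rw [← e]
    simp [Nat.ModEq]

/-- For `k ≥ 1`, `n ≥ k+1`, with `m* = ⌊(n−1)/k⌋ − 1` and
`α_k(n) = ∑_{j=0}^{m*} 2^{n−k(j+1)−1}`, there is a set `S` of odd integers of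
cardinality `α_k(n)` with every `l ∈ S` satisfying `l ≥ 3` and
`1 < m < 2^n` for all `m ∈ M_k(l)`, the sets `M_k(l)`, `l ∈ S`, being pairwise
mutually independent. -/
theorem exists_independent_copies (k n : ℕ) (hk : 1 ≤ k) (hn : k + 1 ≤ n) :
    ∃ S : Finset ℕ,
      S.card = ∑ j ∈ Finset.range ((n - 1) / k - 1 + 1), 2 ^ (n - k * (j + 1) - 1) ∧
      (∀ l ∈ S, Odd l ∧ 3 ≤ l) ∧
      (∀ l ∈ S, ∀ m ∈ Ml l k, 1 < m ∧ m < 2 ^ n) ∧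
      (∀ l ∈ S, ∀ l' ∈ S, l ≠ l' → MutuallyIndependent (Ml l k) (Ml l' k)) := by
  refine ⟨(halfRoots k n).image fun a => 2 * a + 1, ?_, ?_, ?_, ?_⟩
  · rw [Finset.card_image_of_injective _ fun a b (h : 2 * a + 1 = 2 * b + 1) => by omega]
    exact card_halfRoots hk hn
  · intro l hl
    obtain ⟨a, ha, rfl⟩ := Finset.mem_image.1 hl
    have := (log_of_mem_halfRoots hk hn ha).1
    exact ⟨⟨a, rfl⟩, by omega⟩
  · intro l hl m hm
    obtain ⟨a, ha, rfl⟩ := Finset.mem_image.1 hl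
    obtain ⟨h1, h2, -⟩ := log_of_mem_halfRoots hk hn ha
    simp only [Ml, Finset.mem_biUnion, Finset.mem_range] at hm
    obtain ⟨j, hj, hm⟩ := hm
    have g := inGap_of_mem_Vl a j m hm
    have hlog := g.log_eq h1
    constructor
    · have : 1 ≤ 2 ^ (j + 1) * a := Nat.mul_pos (by positivity) h1
      have := g.1
      omega
    · exact Nat.lt_pow_of_log_lt (by norm_num) (by omega)
  · intro l hl l' hl' hne
    obtain ⟨a, ha, rfl⟩ := Finset.mem_image.1 hl
    obtain ⟨a', ha', rfl⟩ := Finset.mem_image.1 hl'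
    obtain ⟨h1, -, h2⟩ := log_of_mem_halfRoots hk hn ha
    obtain ⟨h1', -, h2'⟩ := log_of_mem_halfRoots hk hn ha'
    exact mutuallyIndependent_Ml h1 h1' (h2.trans h2'.symm) fun e => hne (by rw [e])
end

section
/- For every k ≥ 1 and every odd integer l ≥ 3, the set M_k(l) has exactly 2·(2^k − 1) − k elements; equivalently, |M_k(l)| satisfies |M_1(l)| = 1 and |M_k(l)| = k + 2·|M_{k−1}(l)| for k ≥ 2. -/
/-- In 0-indexed form, `Vl (m + 1) j` is an interval of consecutive integers. -/
lemma Vl_eq_Ioo (m j : ℕ) : Vl (m + 1) j = Finset.Ioo (2 ^ j * m) (2 ^ j * (m + 2)) := by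
  induction j with
  | zero =>
    ext x
    simp only [Vl, Finset.mem_singleton, Finset.mem_Ioo]
    omega
  | succ j ih =>
    have hpos : 0 < 2 ^ j := by positivity
    ext x
    simp only [Vl, ih, Finset.mem_biUnion, Finset.mem_Ioo, Finset.mem_insert,
      Finset.mem_singleton, pow_succ, mul_add, mul_right_comm _ 2]
    generalize 2 ^ j * m = a
    generalize 2 ^ j = b at hpos ⊢
    constructor
    · rintro ⟨i, hi, hx⟩
      omega
    · intro hx
      -- An even `x` comes from its half; an odd `x` has two candidate parents,
      -- of which the upper one fails only at the right end of the interval.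
      by_cases h : (x + 1) / 2 < a + b * 2
      · exact ⟨(x + 1) / 2, by omega, by omega⟩
      · exact ⟨x / 2, by omega, by omega⟩

lemma disjoint_Vl_of_lt {m i j : ℕ} (hm : 2 ≤ m) (hij : i < j) :
    Disjoint (Vl (m + 1) i) (Vl (m + 1) j) := by
  have hle : 2 ^ i * (m + 2) ≤ 2 ^ j * m :=
    calc 2 ^ i * (m + 2) ≤ 2 ^ i * (2 * m) := Nat.mul_le_mul_left _ (by omega)
      _ = 2 ^ (i + 1) * m := by ring
      _ ≤ 2 ^ j * m := Nat.mul_le_mul_right _ (Nat.pow_le_pow_right (by norm_num) hij)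
  rw [Vl_eq_Ioo, Vl_eq_Ioo, Finset.disjoint_left]
  intro x hx hx'
  rw [Finset.mem_Ioo] at hx hx'
  omega

lemma card_Vl (m j : ℕ) : (Vl (m + 1) j).card + 1 = 2 ^ (j + 1) := by
  have hpos : 0 < 2 ^ j := by positivity
  rw [Vl_eq_Ioo, Nat.card_Ioo, mul_add, pow_succ]
  omega

/-- For every `k ≥ 1` and every odd `l ≥ 3`, the set `M_k(l)`
has exactly `2·(2^k − 1) − k` elements. -/
theorem card_Ml (k l : ℕ) (hk : 1 ≤ k) (hl : 3 ≤ l) (hodd : Odd l) :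
    (Ml l k).card = 2 * (2 ^ k - 1) - k := by
  obtain ⟨m, rfl⟩ : ∃ m, l = m + 1 := ⟨l - 1, by omega⟩
  have hdisj : Set.PairwiseDisjoint (Finset.range k : Set ℕ) (Vl (m + 1)) := by
    intro i _ j _ hne
    rcases lt_or_gt_of_ne hne with h | h
    · exact disjoint_Vl_of_lt (by omega) h
    · exact (disjoint_Vl_of_lt (by omega) h).symm
  -- Subtraction-free form of the sum of the cardinalities.
  have hsum (n : ℕ) : ∑ j ∈ Finset.range n, (Vl (m + 1) j).card + n + 2 = 2 * 2 ^ n := by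
    induction n with
    | zero => simp
    | succ n ih =>
      have hc := card_Vl m n
      rw [Finset.sum_range_succ]
      rw [pow_succ] at hc ⊢
      omega
  have := hsum k
  rw [Ml, Finset.card_biUnion hdisj]
  omega
end

section
/- For every k ≥ 1, limsup_{n→∞} (1/n)·log|X_n| ≤ (1/(2·(2^k − 1)))·log|Σ_k| + (k/(2·(2^k − 1)))·log 2. -/
/-!
Fix `k` and put `T = ⌊(n + 1) / 2^(k+1)⌋`. For `j = 1, …, k` the interval `[2^j T, 2^(j+1) T)`
consists of the `T` multiples `2^j t` of `2^j` (`T ≤ t < 2T`) and of the open gaps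
`(2^j t, 2^j (t+1)) = V_j(2t+1)`. For fixed `t` the gaps of all levels together form the set
`M_k(2t+1)`, which `shift t` identifies with `M_k(3)` compatibly with `i ↦ i + 1` and `i ↦ 2i`.
Hence a point of `X_n` is determined by its restriction to `[1, 2T)`, by `T` points of `Σ_k`, by
`kT` free symbols at the multiples, and by at most `2^(k+1)` symbols at positions `≥ 2^(k+1) T`
(`card_XA_le`):

  `|X_n| ≤ |X_{2T-1}| · |Σ_k|^T · 2^(kT) · 2^(2^(k+1))`.

With `α = (log |Σ_k| + k log 2) / (2 (2^k - 1))` one has `2T α + T (log |Σ_k| + k log 2)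
= 2^(k+1) T α ≤ (n + 1) α`, so iterating gives `log |X_n| ≤ α (n + 1) + O(log n)`
(`log_card_XA_le`).
-/

open Filter Topology

/-- `X_n` : functions `x : {1,…,n} → {0,1}` (encoded as functions `ℕ → Fin 2`
vanishing outside `[1,n]`) with `x_k·x_{2k} = 0` whenever `2k ≤ n` and
`A(x_k, x_{k+1}) = 1` whenever `k+1 ≤ n`. -/
def XA (A : Fin 2 → Fin 2 → Fin 2) (n : ℕ) : Set (ℕ → Fin 2) :=
  {x | (∀ k, 1 ≤ k → 2 * k ≤ n → x k * x (2 * k) = 0) ∧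
       (∀ k, 1 ≤ k → k + 1 ≤ n → A (x k) (x (k + 1)) = 1) ∧
       (∀ m, m = 0 ∨ n < m → x m = 0)}

/-- `Σ_k` : functions `y : M_k(3) → {0,1}` with `y_i·y_{2i} = 0` whenever `i, 2i ∈
M_k(3)` and `A(y_i, y_{i+1}) = 1` whenever `i, i+1 ∈ M_k(3)`. -/
def SigA (A : Fin 2 → Fin 2 → Fin 2) (k : ℕ) : Set (ℕ → Fin 2) :=
  {y | (∀ i, i ∈ Ml 3 k → 2 * i ∈ Ml 3 k → y i * y (2 * i) = 0) ∧
       (∀ i, i ∈ Ml 3 k → i + 1 ∈ Ml 3 k → A (y i) (y (i + 1)) = 1) ∧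
       (∀ m, m ∉ Ml 3 k → y m = 0)}

/-! ### The sets `V_j(3)` and the maps `M_k(3) → M_k(2t+1)` -/

lemma Vl_three (j : ℕ) : Vl 3 j = Finset.Ioo (2 ^ (j + 1)) (2 ^ (j + 2)) := by
  induction j with
  | zero => decide
  | succ j ih =>
    have h0 : 0 < 2 ^ j := by positivity
    ext m
    simp only [Vl, ih, Finset.mem_biUnion, Finset.mem_Ioo, Finset.mem_insert,
      Finset.mem_singleton]
    have e1 : 2 ^ (j + 1) = 2 * 2 ^ j := by ring
    have e2 : 2 ^ (j + 2) = 4 * 2 ^ j := by ring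
    have e4 : 2 ^ (j + 1 + 2) = 8 * 2 ^ j := by ring
    rw [e1, e2, e4]
    constructor
    · rintro ⟨i, hi, h⟩
      omega
    · intro h
      -- The least `m` arises only as `2i - 1`; for all others `i = m / 2` works.
      by_cases hm : m = 4 * 2 ^ j + 1
      · exact ⟨2 * 2 ^ j + 1, by omega, by omega⟩
      · exact ⟨m / 2, by omega, by omega⟩

lemma mem_Ml_three {k i : ℕ} :
    i ∈ Ml 3 k ↔ ∃ j < k, 2 ^ (j + 1) < i ∧ i < 2 ^ (j + 2) := by
  simp [Ml, Vl_three]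

/-- For `i ∈ V_j(3)`, i.e. `i = 2^j + r` with `0 < r < 2^j`, this is `2^j * t + r`, the
corresponding element of `V_j(2 * t + 1)` (for `t ≥ 1`). -/
def shift (t i : ℕ) : ℕ := 2 ^ Nat.log 2 i * t + (i - 2 ^ Nat.log 2 i)

lemma shift_eq {t j i : ℕ} (h1 : 2 ^ j ≤ i) (h2 : i < 2 ^ (j + 1)) :
    shift t i = 2 ^ j * t + (i - 2 ^ j) := by
  rw [shift, Nat.log_eq_of_pow_le_of_lt_pow h1 h2]

lemma shift_le {T t k i n : ℕ} (hn : 2 ^ (k + 1) * T ≤ n + 1) (ht : t < 2 * T)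
    (hi : i ∈ Ml 3 k) : shift t i ≤ n := by
  obtain ⟨j, hj, h1, h2⟩ := mem_Ml_three.1 hi
  rw [shift_eq h1.le h2]
  have h3 : 2 ^ (j + 1) * (t + 1) ≤ 2 ^ k * (2 * T) :=
    Nat.mul_le_mul (Nat.pow_le_pow_right (by norm_num) hj) ht
  have h4 : 2 ^ k * (2 * T) = 2 ^ (k + 1) * T := by ring
  have h5 : 2 ^ (j + 2) = 2 * 2 ^ (j + 1) := by ring
  rw [mul_add] at h3
  omega

lemma one_le_shift {t k i : ℕ} (hi : i ∈ Ml 3 k) : 1 ≤ shift t i := by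
  obtain ⟨j, hj, h1, h2⟩ := mem_Ml_three.1 hi
  rw [shift_eq h1.le h2]
  omega

lemma shift_two_mul {t k i : ℕ} (hi : i ∈ Ml 3 k) : shift t (2 * i) = 2 * shift t i := by
  obtain ⟨j, hj, h1, h2⟩ := mem_Ml_three.1 hi
  have e1 : 2 ^ (j + 2) = 2 * 2 ^ (j + 1) := by ring
  have e2 : 2 ^ (j + 2 + 1) = 2 * 2 ^ (j + 2) := by ring
  rw [shift_eq h1.le h2, shift_eq (j := j + 2) (i := 2 * i) (by omega) (by omega), e1, mul_assoc]
  omega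

lemma shift_succ {t k i : ℕ} (hi : i ∈ Ml 3 k) (hi' : i + 1 ∈ Ml 3 k) :
    shift t (i + 1) = shift t i + 1 := by
  obtain ⟨j, hj, h1, h2⟩ := mem_Ml_three.1 hi
  -- `i + 1 ∈ M_k(3)` is not a power of two, hence lies in the same level as `i`.
  have h3 : i + 1 < 2 ^ (j + 2) := by
    obtain ⟨j', hj', h1', h2'⟩ := mem_Ml_three.1 hi'
    by_contra h
    have h4 : i + 1 = 2 ^ (j + 2) := by omega
    rw [h4] at h1' h2'
    have := (Nat.pow_lt_pow_iff_right (by norm_num : 1 < 2)).1 h1'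
    have := (Nat.pow_lt_pow_iff_right (by norm_num : 1 < 2)).1 h2'
    omega
  rw [shift_eq h1.le h2, shift_eq (by omega) h3]
  omega

/-! ### Finiteness and the recursive bound -/

lemma finite_of_support (S : Finset ℕ) (X : Set (ℕ → Fin 2))
    (hX : ∀ x ∈ X, ∀ m, m ∉ S → x m = 0) : Finite X := by
  refine Finite.of_injective (fun (x : X) (i : S) => x.1 i) ?_
  intro x y h
  ext1
  funext m
  by_cases hm : m ∈ S
  · exact congrFun h ⟨m, hm⟩
  · rw [hX _ x.2 m hm, hX _ y.2 m hm]

instance finite_XA (A : Fin 2 → Fin 2 → Fin 2) (n : ℕ) : Finite (XA A n) :=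
  finite_of_support (Finset.Icc 1 n) _ fun x hx m hm => hx.2.2 m (by
    simp only [Finset.mem_Icc] at hm
    omega)

instance finite_SigA (A : Fin 2 → Fin 2 → Fin 2) (k : ℕ) : Finite (SigA A k) :=
  finite_of_support (Ml 3 k) _ fun _ hx => hx.2.2

lemma card_XA_pos (A : Fin 2 → Fin 2 → Fin 2) (hA : ∀ a : Fin 2, A 0 a = 1 ∧ A a 0 = 1)
    (n : ℕ) : 0 < Nat.card (XA A n) := by
  have : Nonempty (XA A n) := ⟨⟨fun _ => 0, by simp [XA, (hA 0).1]⟩⟩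
  exact Nat.card_pos

lemma card_SigA_pos (A : Fin 2 → Fin 2 → Fin 2) (hA : ∀ a : Fin 2, A 0 a = 1 ∧ A a 0 = 1)
    (k : ℕ) : 0 < Nat.card (SigA A k) := by
  have : Nonempty (SigA A k) := ⟨⟨fun _ => 0, by simp [SigA, (hA 0).1]⟩⟩
  exact Nat.card_pos

lemma card_XA_zero_le (A : Fin 2 → Fin 2 → Fin 2) : Nat.card (XA A 0) ≤ 1 := by
  have : Subsingleton (XA A 0) := ⟨fun x y => by
    ext1
    funext m
    rw [x.2.2.2 m (by omega), y.2.2.2 m (by omega)]⟩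
  exact Finite.card_le_one_iff_subsingleton.2 this

/-- Restriction of a point of `X_n` to `[1, m]`. -/
def restr (A : Fin 2 → Fin 2 → Fin 2) {n m : ℕ} (hmn : m ≤ n) (x : XA A n) : XA A m :=
  ⟨fun i => if i ≤ m then x.1 i else 0, by
    obtain ⟨x, h1, h2, h3⟩ := x
    refine ⟨fun i hi hi2 => ?_, fun i hi hi2 => ?_, fun i hi => ?_⟩
    · simp only [show i ≤ m by omega, hi2, if_true]
      exact h1 i hi (by omega)
    · simp only [show i ≤ m by omega, hi2, if_true]
      exact h2 i hi (by omega)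
    · dsimp only
      split_ifs
      · exact h3 i (by omega)
      · rfl⟩

/-- The restriction of a point of `X_n` to `M_k(2 * t + 1)`, transported to `M_k(3)`. -/
def block (A : Fin 2 → Fin 2 → Fin 2) {n k T t : ℕ} (hn : 2 ^ (k + 1) * T ≤ n + 1)
    (ht : t < 2 * T) (x : XA A n) : SigA A k :=
  ⟨fun i => if i ∈ Ml 3 k then x.1 (shift t i) else 0, by
    obtain ⟨x, h1, h2, h3⟩ := x
    refine ⟨fun i hi hi2 => ?_, fun i hi hi2 => ?_, fun i hi => ?_⟩
    · simp only [hi, hi2, if_true]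
      have := shift_le hn ht hi2
      rw [shift_two_mul hi] at this ⊢
      exact h1 _ (one_le_shift hi) this
    · simp only [hi, hi2, if_true]
      have := shift_le hn ht hi2
      rw [shift_succ hi hi2] at this ⊢
      exact h2 _ (one_le_shift hi) this
    · simp [hi]⟩

/-- Every position in `[2 * T, 2 ^ (k + 1) * T)` is a multiple `2^j * t` of `2^j` at some level
`1 ≤ j ≤ k` or belongs to `M_k(2 * t + 1)`, for some `T ≤ t < 2 * T`. -/
lemma cover {k T p : ℕ} (hp : 2 * T ≤ p) (hp' : p < 2 ^ (k + 1) * T) :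
    ∃ t, T ≤ t ∧ t < 2 * T ∧
      ((∃ j < k, p = 2 ^ (j + 1) * t) ∨ ∃ i ∈ Ml 3 k, p = shift t i) := by
  have hT : 0 < T := Nat.pos_of_ne_zero fun h => by simp [h] at hp'
  obtain ⟨j, hjk, hj1, hj2⟩ : ∃ j < k, 2 ^ (j + 1) * T ≤ p ∧ p < 2 ^ (j + 2) * T := by
    clear * - hp hp'
    induction k with
    | zero => omega
    | succ k ih =>
      by_cases h : p < 2 ^ (k + 1) * T
      · obtain ⟨j, hj, h⟩ := ih h
        exact ⟨j, by omega, h⟩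
      · exact ⟨k, by omega, by omega, hp'⟩
  have hpos : 0 < 2 ^ (j + 1) := by positivity
  have hdm := Nat.div_add_mod p (2 ^ (j + 1))
  have hlt := Nat.mod_lt p hpos
  have e : 2 ^ (j + 2) = 2 * 2 ^ (j + 1) := by ring
  refine ⟨p / 2 ^ (j + 1), ?_, ?_, ?_⟩
  · rw [Nat.le_div_iff_mul_le hpos]
    linarith
  · rw [Nat.div_lt_iff_lt_mul hpos]
    rw [e] at hj2
    linarith
  · by_cases hr : p % 2 ^ (j + 1) = 0
    · exact Or.inl ⟨j, hjk, by omega⟩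
    · refine Or.inr ⟨2 ^ (j + 1) + p % 2 ^ (j + 1),
        mem_Ml_three.2 ⟨j, hjk, by omega, by omega⟩, ?_⟩
      rw [shift_eq (j := j + 1) (by omega) (by rw [show j + 1 + 1 = j + 2 from rfl]; omega)]
      omega

/-- The restrictions of `x ∈ X_n` to `[1, 2T)`, to the sets `M_k(2t+1)` with `T ≤ t < 2T`, to the
multiples `2^j * t` and to the remaining tail determine `x`. -/
lemma card_XA_le (A : Fin 2 → Fin 2 → Fin 2) (k n T : ℕ) (hT : T = (n + 1) / 2 ^ (k + 1)) :
    Nat.card (XA A n) ≤ Nat.card (XA A (2 * T - 1)) *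
      (Nat.card (SigA A k) ^ T * (2 ^ (k * T) * 2 ^ 2 ^ (k + 1))) := by
  have hpos : 0 < 2 ^ (k + 1) := by positivity
  have hdm := Nat.div_add_mod (n + 1) (2 ^ (k + 1))
  have hlt := Nat.mod_lt (n + 1) hpos
  rw [← hT] at hdm
  have hn : 2 ^ (k + 1) * T ≤ n + 1 := by omega
  have h2 : 2 * T - 1 ≤ n := by
    have : 2 * T ≤ 2 ^ (k + 1) * T :=
      Nat.mul_le_mul_right _ (by rw [pow_succ]; have := Nat.one_le_two_pow (n := k); omega)
    omega
  let F : XA A n → XA A (2 * T - 1) × (Fin T → SigA A k) × (Fin k × Fin T → Fin 2) ×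
      (Fin (2 ^ (k + 1)) → Fin 2) := fun x =>
    (restr A h2 x, fun s => block A (t := T + s) hn (by omega) x,
      fun q => x.1 (2 ^ (q.1.1 + 1) * (T + q.2)), fun q => x.1 (2 ^ (k + 1) * T + q))
  have hF : Function.Injective F := by
    intro x y hxy
    simp only [F, Prod.mk.injEq] at hxy
    obtain ⟨hr, hb, hm, ht⟩ := hxy
    ext1
    funext p
    by_cases h0 : p = 0 ∨ n < p
    · rw [x.2.2.2 p h0, y.2.2.2 p h0]
    by_cases h1 : p ≤ 2 * T - 1
    · have := congrFun (congrArg Subtype.val hr) p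
      simpa [restr, h1] using this
    by_cases h3 : 2 ^ (k + 1) * T ≤ p
    · have := congrFun ht ⟨p - 2 ^ (k + 1) * T, by omega⟩
      simpa [Nat.add_sub_cancel' h3] using this
    obtain ⟨t, ht1, ht2, ⟨j, hj, rfl⟩ | ⟨i, hi, rfl⟩⟩ :=
      cover (k := k) (T := T) (p := p) (by omega) (by omega)
    · have := congrFun hm (⟨j, hj⟩, ⟨t - T, by omega⟩)
      simpa [Nat.add_sub_cancel' ht1] using this
    · have := congrFun (congrArg Subtype.val (congrFun hb ⟨t - T, by omega⟩)) i
      simpa [block, hi, Nat.add_sub_cancel' ht1] using this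
  refine (Nat.card_le_card_of_injective F hF).trans (le_of_eq ?_)
  simp [Nat.card_prod, Nat.card_fun]

/-! ### Iteration and the limit -/

lemma log_card_XA_le (A : Fin 2 → Fin 2 → Fin 2)
    (hA : ∀ a : Fin 2, A 0 a = 1 ∧ A a 0 = 1) (k : ℕ) (hk : 1 ≤ k) (α : ℝ)
    (hα : α * (2 * ((2 : ℝ) ^ k - 1)) = Real.log (Nat.card (SigA A k)) + k * Real.log 2)
    (n : ℕ) :
    Real.log (Nat.card (XA A n)) ≤
      α * (n + 1) + 2 ^ (k + 1) * Real.log 2 * (Nat.log 2 (n + 1) + 1) := by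
  have hl2 : 0 < Real.log 2 := Real.log_pos (by norm_num)
  have hS := card_SigA_pos A hA k
  have hα0 : 0 ≤ α := by
    have h1 : (2 : ℝ) ≤ 2 ^ k := by
      simpa using pow_le_pow_right₀ (by norm_num : (1 : ℝ) ≤ 2) hk
    have h2 : 0 ≤ α * (2 * ((2 : ℝ) ^ k - 1)) := by
      rw [hα]
      positivity
    exact nonneg_of_mul_nonneg_left h2 (by linarith)
  induction n using Nat.strong_induction_on with
  | _ n ih =>
  obtain ⟨T, hT⟩ : ∃ T, T = (n + 1) / 2 ^ (k + 1) := ⟨_, rfl⟩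
  have hX := card_XA_pos A hA
  have hrec : Real.log (Nat.card (XA A n)) ≤ Real.log (Nat.card (XA A (2 * T - 1))) +
      (T * (α * (2 * ((2 : ℝ) ^ k - 1))) + 2 ^ (k + 1) * Real.log 2) := by
    have h := card_XA_le A k n T hT
    have h' : (Nat.card (XA A n) : ℝ) ≤ Nat.card (XA A (2 * T - 1)) *
      (Nat.card (SigA A k) ^ T * (2 ^ (k * T) * 2 ^ 2 ^ (k + 1))) := by exact_mod_cast h
    have hx0 : (Nat.card (XA A (2 * T - 1)) : ℝ) ≠ 0 := by
      exact_mod_cast (hX _).ne'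
    have hs0 : (Nat.card (SigA A k) : ℝ) ≠ 0 := by exact_mod_cast hS.ne'
    refine (Real.log_le_log (by exact_mod_cast hX n) h').trans (le_of_eq ?_)
    rw [Real.log_mul hx0 (by positivity), Real.log_mul (by positivity) (by positivity),
      Real.log_mul (by positivity) (by positivity), Real.log_pow, Real.log_pow, Real.log_pow, hα]
    push_cast
    ring
  have hD : 0 ≤ 2 ^ (k + 1) * Real.log 2 := by positivity
  rcases Nat.eq_zero_or_pos T with h0 | h0
  · have h1 : Nat.card (XA A 0) = 1 := le_antisymm (card_XA_zero_le A) (hX 0)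
    simp only [h0, mul_zero, Nat.zero_sub, h1] at hrec
    have h2 : 0 ≤ α * (n + 1) := by positivity
    have h3 : 0 ≤ 2 ^ (k + 1) * Real.log 2 * (Nat.log 2 (n + 1) : ℝ) := by positivity
    simp only [Nat.cast_one, Real.log_one, Nat.cast_zero, zero_mul, zero_add] at hrec
    linarith
  · have hmul : 2 ^ (k + 1) * T ≤ n + 1 := by
      rw [hT]
      exact Nat.mul_div_le _ _
    have h4 : 4 * T ≤ n + 1 := by
      refine le_trans (Nat.mul_le_mul_right _ ?_) hmul
      exact Nat.pow_le_pow_right (n := 2) (by norm_num) (show 2 ≤ k + 1 by omega)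
    have hih := ih (2 * T - 1) (by omega)
    have hc : ((2 * T - 1 : ℕ) : ℝ) + 1 = 2 * T := by
      have : 2 * T - 1 + 1 = 2 * T := by omega
      exact_mod_cast this
    rw [hc, show 2 * T - 1 + 1 = 2 * T by omega] at hih
    -- Each step at least halves `n + 1`, so it uses up one unit of `Nat.log 2 (n + 1)`.
    have hlog : (Nat.log 2 (2 * T) : ℝ) + 1 ≤ Nat.log 2 (n + 1) := by
      have : Nat.log 2 (2 * T) + 1 ≤ Nat.log 2 (n + 1) := by
        rw [← Nat.log_mul_base (by norm_num) (by omega)]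
        exact Nat.log_mono_right (by omega)
      exact_mod_cast this
    have h5 := mul_le_mul_of_nonneg_left hlog hD
    have h6 : α * ((2 : ℝ) ^ (k + 1) * T) ≤ α * (n + 1) :=
      mul_le_mul_of_nonneg_left (by exact_mod_cast hmul) hα0
    rw [pow_succ] at h6
    linarith

lemma tendsto_natLog_div :
    Tendsto (fun n : ℕ => (Nat.log 2 (n + 1) : ℝ) / n) atTop (𝓝 0) := by
  have h1 : Tendsto (fun n : ℕ => Real.log ((n : ℝ) + 1) / n) atTop (𝓝 0) := by
    have h2 := (Real.isLittleO_log_id_atTop.tendsto_div_nhds_zero).comp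
      (tendsto_natCast_atTop_atTop.comp (tendsto_add_atTop_nat 1))
    have h3 : Tendsto (fun n : ℕ => 1 + 1 / (n : ℝ)) atTop (𝓝 (1 + 0)) :=
      tendsto_const_nhds.add tendsto_one_div_atTop_nhds_zero_nat
    have h4 := h2.mul h3
    rw [zero_mul] at h4
    refine h4.congr' ?_
    filter_upwards [eventually_gt_atTop 0] with n hn
    have : (n : ℝ) ≠ 0 := by positivity
    have : (n : ℝ) + 1 ≠ 0 := by positivity
    simp only [Function.comp, id, Nat.cast_add, Nat.cast_one]
    field_simp
  have h5 := h1.const_mul (1 / Real.log 2)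
  rw [mul_zero] at h5
  refine squeeze_zero (fun n => by positivity) (fun n => ?_) h5
  rw [← mul_div_assoc]
  refine div_le_div_of_nonneg_right ?_ (by positivity)
  have hl2 : 0 < Real.log 2 := Real.log_pos (by norm_num)
  rw [one_div, ← div_eq_inv_mul, le_div_iff₀ hl2, ← Real.log_pow]
  refine Real.log_le_log (by positivity) ?_
  exact_mod_cast Nat.pow_log_le_self 2 (by omega : n + 1 ≠ 0)

/-- For every `k ≥ 1`,
`limsup_{n→∞} (1/n)·log|X_n| ≤ (1/(2(2^k − 1)))·log|Σ_k| + (k/(2(2^k − 1)))·log 2`. -/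
theorem limsup_le (A : Fin 2 → Fin 2 → Fin 2)
    (hA : ∀ a : Fin 2, A 0 a = 1 ∧ A a 0 = 1) (k : ℕ) (hk : 1 ≤ k) :
    Filter.atTop.limsup (fun n : ℕ => Real.log (Nat.card (XA A n)) / (n : ℝ)) ≤
      (1 / (2 * ((2 : ℝ) ^ k - 1))) * Real.log (Nat.card (SigA A k)) +
        ((k : ℝ) / (2 * ((2 : ℝ) ^ k - 1))) * Real.log 2 := by
  set α : ℝ := (1 / (2 * ((2 : ℝ) ^ k - 1))) * Real.log (Nat.card (SigA A k)) +
        ((k : ℝ) / (2 * ((2 : ℝ) ^ k - 1))) * Real.log 2 with hαdef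
  have h1 : (2 : ℝ) ≤ 2 ^ k := by
    simpa using pow_le_pow_right₀ (by norm_num : (1 : ℝ) ≤ 2) hk
  have hα : α * (2 * ((2 : ℝ) ^ k - 1)) =
      Real.log (Nat.card (SigA A k)) + k * Real.log 2 := by
    have : (2 : ℝ) ^ k - 1 ≠ 0 := by linarith
    rw [hαdef]
    field_simp
  set D : ℝ := 2 ^ (k + 1) * Real.log 2
  have hlim : Tendsto (fun n : ℕ => α * (1 + 1 / (n : ℝ)) +
      D * ((Nat.log 2 (n + 1) : ℝ) / n + 1 / (n : ℝ))) atTop (𝓝 α) := by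
    have h2 := ((tendsto_one_div_atTop_nhds_zero_nat (𝕜 := ℝ)).const_add 1).const_mul α
    have h3 := (tendsto_natLog_div.add (tendsto_one_div_atTop_nhds_zero_nat (𝕜 := ℝ))).const_mul D
    simpa using h2.add h3
  rw [← hlim.limsup_eq]
  refine limsup_le_limsup ?_ ?_ hlim.isBoundedUnder_le
  · filter_upwards [eventually_gt_atTop 0] with n hn
    have hn' : (0 : ℝ) < n := by exact_mod_cast hn
    rw [div_le_iff₀ hn']
    refine (log_card_XA_le A hA k hk α hα n).trans (le_of_eq ?_)
    field_simp
    ring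
  · refine IsBoundedUnder.isCoboundedUnder_le ⟨0, ?_⟩
    simp only [eventually_map]
    exact Eventually.of_forall fun n => div_nonneg (Real.log_natCast_nonneg _) (by positivity)
end
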